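/- (Délange–Ikehara Tauberian theorem, as used) Suppose f(s) = ∑_{n=1}^∞ a_n n^{−s} is a Dirichlet series with nonnegative coefficients, convergent for Re(s) > a > 0, and that in its domain of convergence f(s) = g(s)(s−a)^{−w} + h(s), where g and h are holomorphic in the closed half-plane Re(s) ≥ a, g(a) ≠ 0, and w > 0. Then ∑_{n ≤ X} a_n ∼ (g(a)/(a·Γ(w)))·X^a·(log X)^{w−1} as X → ∞. -/

import Mathlib

open Filter

namespace DI
open MeasureTheory Set Complex
open scoped Topology

lemma smooth_data {A : ℝ} {g : ℂ → ℂ} (hg : AnalyticOn ℂ g {s : ℂ | A ≤ s.re}) :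
    ∃ G1 G2 : ℂ → ℂ, ContinuousOn g {s : ℂ | A ≤ s.re} ∧ ContinuousOn G1 {s : ℂ | A ≤ s.re} ∧
      ContinuousOn G2 {s : ℂ | A ≤ s.re} ∧
      ∀ z : ℂ, A < z.re → HasDerivAt g (G1 z) z ∧ HasDerivAt G1 (G2 z) z := by
  set S := {s : ℂ | A ≤ s.re} with hS
  have hSi : ∀ z : ℂ, A < z.re → S ∈ 𝓝 z := fun z hz =>
    mem_of_superset ((isOpen_lt continuous_const continuous_re).mem_nhds hz)
      (fun y hy => (le_of_lt hy : A ≤ y.re))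
  have hU : UniqueDiffOn ℂ S := by
    have : UniqueDiffOn ℝ S := by
      apply uniqueDiffOn_convex (convex_halfSpace_re_ge A)
      refine ⟨(A + 1 : ℝ), mem_interior_iff_mem_nhds.2 (hSi _ ?_)⟩
      simp
    exact this.mono_field
  have h2 : ContDiffOn ℂ 2 g S := hg.contDiffOn hU
  have h1 : ContDiffOn ℂ 1 (derivWithin g S) S := h2.derivWithin hU (by norm_num)
  have h0 : ContDiffOn ℂ 0 (derivWithin (derivWithin g S) S) S := h1.derivWithin hU (by norm_num)
  refine ⟨derivWithin g S, derivWithin (derivWithin g S) S, h2.continuousOn, h1.continuousOn,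
    h0.continuousOn, fun z hz => ⟨?_, ?_⟩⟩
  · have hz' : z ∈ S := le_of_lt hz
    exact ((h2.differentiableOn (by norm_num) z hz').hasDerivWithinAt).hasDerivAt (hSi z hz)
  · have hz' : z ∈ S := le_of_lt hz
    exact ((h1.differentiableOn (by norm_num) z hz').hasDerivWithinAt).hasDerivAt (hSi z hz)

lemma parts1 {u u1 : ℝ → ℂ} (h : ∀ t, HasDerivAt u (u1 t) t) (hu : Integrable u)
    (hu1 : Integrable u1) {x : ℝ} (hx : x ≠ 0) :
    ∫ t : ℝ, cexp (I * t * x) * u t = -(1 / (I * x)) * ∫ t : ℝ, cexp (I * t * x) * u1 t := by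
  have hIx : (I * x : ℂ) ≠ 0 := mul_ne_zero I_ne_zero (by exact_mod_cast hx)
  have hd : ∀ t : ℝ, HasDerivAt (fun t : ℝ => cexp (I * t * x) / (I * x)) (cexp (I * t * x)) t := by
    intro t
    have h1 : HasDerivAt (fun t : ℝ => I * t * x) (I * x) t := by
      simpa using ((Complex.ofRealCLM.hasDerivAt (x := t)).const_mul I).mul_const (x : ℂ)
    have := (h1.cexp).div_const (I * x)
    rwa [mul_div_assoc, div_self hIx, mul_one] at this
  have hn : ∀ t : ℝ, ‖cexp (I * t * x)‖ = 1 := by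
    intro t
    have : I * t * x = ((t * x : ℝ) : ℂ) * I := by push_cast; ring
    rw [this, norm_exp_ofReal_mul_I]
  have hi : ∀ v : ℝ → ℂ, Integrable v → Integrable (fun t : ℝ => cexp (I * t * x) * v t) := by
    intro v hv
    apply hv.bdd_mul (c := 1) (Continuous.aestronglyMeasurable (by fun_prop))
    exact Eventually.of_forall fun t => (hn t).le
  have := integral_mul_deriv_eq_deriv_mul_of_integrable (u := u) (u' := u1)
    (v := fun t : ℝ => cexp (I * t * x) / (I * x)) (v' := fun t : ℝ => cexp (I * t * x))
    (fun t _ => h t) (fun t _ => hd t) ?_ ?_ ?_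
  · simp only [mul_comm (cexp _)]
    rw [this, ← integral_const_mul, ← integral_neg]
    congr 1; ext t; field_simp
  · exact (hi u hu).congr (Eventually.of_forall fun t => by simp [mul_comm])
  · exact ((hi u1 hu1).div_const (I * x)).congr
      (Eventually.of_forall fun t => by simp only [Pi.mul_apply]; field_simp)
  · exact ((hi u hu).div_const (I * x)).congr
      (Eventually.of_forall fun t => by simp only [Pi.mul_apply]; field_simp)

lemma parts2 {u u1 u2 : ℝ → ℂ} (h : ∀ t, HasDerivAt u (u1 t) t)
    (h1 : ∀ t, HasDerivAt u1 (u2 t) t) (hu : Integrable u)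
    (hu1 : Integrable u1) (hu2 : Integrable u2) {x : ℝ} (hx : x ≠ 0) :
    ∫ t : ℝ, cexp (I * t * x) * u t = -(1 / (x : ℂ) ^ 2) * ∫ t : ℝ, cexp (I * t * x) * u2 t := by
  rw [parts1 h hu hu1 hx, parts1 h1 hu1 hu2 hx, ← mul_assoc]
  congr 1
  have : (x : ℂ) ≠ 0 := by exact_mod_cast hx
  field_simp
  simp

lemma re_one_add (v : ℝ) : (1 + I * v : ℂ) ∈ slitPlane := by
  left; simp

lemma real_mul_cpow {r : ℝ} (hr : 0 < r) {z : ℂ} (hz : z ≠ 0) (c : ℂ) :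
    ((r : ℂ) * z) ^ c = (r : ℂ) ^ c * z ^ c := by
  have hr' : (r : ℂ) ≠ 0 := by exact_mod_cast hr.ne'
  rw [cpow_def_of_ne_zero (mul_ne_zero hr' hz), cpow_def_of_ne_zero hr', cpow_def_of_ne_zero hz,
    Complex.log_ofReal_mul hr hz, ← Complex.exp_add, ofReal_log hr.le]
  ring_nf

lemma norm_cpow_line (v : ℝ) (b : ℝ) :
    ‖(1 + I * v : ℂ) ^ (-(b : ℂ))‖ = (1 + ‖v‖ ^ 2) ^ (-b / 2) := by
  rw [← ofReal_neg, Complex.norm_cpow_real]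
  have h1 : ‖(1 + I * v : ℂ)‖ = Real.sqrt (1 + v ^ 2) := by
    have : (1 + I * v : ℂ) = ((1 : ℝ) : ℂ) + (v : ℝ) * I := by push_cast; ring
    rw [this, Complex.norm_add_mul_I]; simp
  rw [h1, Real.sqrt_eq_rpow, ← Real.rpow_mul (by positivity)]
  simp only [Real.norm_eq_abs, sq_abs]
  congr 1; ring

lemma integrable_line {b : ℝ} (hb : 1 < b) :
    Integrable (fun v : ℝ => (1 + I * v : ℂ) ^ (-(b : ℂ))) := by
  have := integrable_rpow_neg_one_add_norm_sq (E := ℝ) (μ := volume) (r := b) (by simpa using hb)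
  refine this.mono' ?_ (Eventually.of_forall fun v => (norm_cpow_line v b).le)
  apply Continuous.aestronglyMeasurable
  refine Continuous.cpow (by fun_prop) continuous_const (fun v => re_one_add v)

noncomputable def EE (A w : ℝ) (G G1 G2 : ℂ → ℂ) (p p1 p2 : ℝ → ℂ) (σ t : ℝ) : ℂ :=
  let z : ℂ := A + (σ + I * t)
  let ζ : ℂ := σ + I * t
  p2 t * G z * ζ ^ 2 + 2 * I * p1 t * G1 z * ζ ^ 2 - p t * G2 z * ζ ^ 2
    - 2 * w * I * p1 t * G z * ζ + 2 * w * p t * G1 z * ζ - w * (w + 1) * p t * G z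

lemma EE_cont {A w : ℝ} {G G1 G2 : ℂ → ℂ}
    (hG : ContinuousOn G {s : ℂ | A ≤ s.re}) (hG1 : ContinuousOn G1 {s : ℂ | A ≤ s.re})
    (hG2 : ContinuousOn G2 {s : ℂ | A ≤ s.re}) {p p1 p2 : ℝ → ℂ}
    (hp : Continuous p) (hp1 : Continuous p1) (hp2 : Continuous p2) :
    ContinuousOn (fun q : ℝ × ℝ => EE A w G G1 G2 p p1 p2 q.1 q.2) (Ici 0 ×ˢ univ) := by
  have hm : MapsTo (fun q : ℝ × ℝ => (A + (q.1 + I * q.2) : ℂ)) (Ici 0 ×ˢ univ)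
      {s : ℂ | A ≤ s.re} := by
    rintro ⟨s, t⟩ ⟨hs, -⟩
    simpa using hs
  have hc : ContinuousOn (fun q : ℝ × ℝ => (A + (q.1 + I * q.2) : ℂ)) (Ici 0 ×ˢ univ) := by
    fun_prop
  have a0 := hG.comp hc hm
  have a1 := hG1.comp hc hm
  have a2 := hG2.comp hc hm
  simp only [Function.comp_def] at a0 a1 a2
  unfold EE
  dsimp only
  fun_prop

lemma EE_bdd {A w : ℝ} {G G1 G2 : ℂ → ℂ}
    (hG : ContinuousOn G {s : ℂ | A ≤ s.re}) (hG1 : ContinuousOn G1 {s : ℂ | A ≤ s.re})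
    (hG2 : ContinuousOn G2 {s : ℂ | A ≤ s.re}) {p p1 p2 : ℝ → ℂ}
    (hp : Continuous p) (hp1 : Continuous p1) (hp2 : Continuous p2) {T : ℝ}
    (s0 : ∀ t, T < |t| → p t = 0) (s1 : ∀ t, T < |t| → p1 t = 0) (s2 : ∀ t, T < |t| → p2 t = 0) :
    ∃ M : ℝ, ∀ σ ∈ Icc (0:ℝ) 1, ∀ t, ‖EE A w G G1 G2 p p1 p2 σ t‖ ≤ M := by
  have hK : IsCompact (Icc (0:ℝ) 1 ×ˢ Icc (-T) T) := isCompact_Icc.prod isCompact_Icc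
  obtain ⟨M, hM⟩ := hK.exists_bound_of_continuousOn
    ((EE_cont (w := w) hG hG1 hG2 hp hp1 hp2).mono (by
      rintro ⟨s, t⟩ ⟨hs, -⟩; exact ⟨hs.1, mem_univ _⟩))
  refine ⟨max M 0, fun σ hσ t => ?_⟩
  by_cases ht : |t| ≤ T
  · exact (hM (σ, t) ⟨hσ, abs_le.1 ht⟩).trans (le_max_left _ _)
  · push Not at ht
    simp [EE, s0 t ht, s1 t ht, s2 t ht]

lemma key_ibp {A w : ℝ} {G G1 G2 : ℂ → ℂ}
    (hG : ContinuousOn G {s : ℂ | A ≤ s.re}) (hG1 : ContinuousOn G1 {s : ℂ | A ≤ s.re})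
    (hG2 : ContinuousOn G2 {s : ℂ | A ≤ s.re})
    (hd : ∀ z : ℂ, A < z.re → HasDerivAt G (G1 z) z ∧ HasDerivAt G1 (G2 z) z) {p p1 p2 : ℝ → ℂ}
    (hp2 : Continuous p2) (hdp : ∀ t, HasDerivAt p (p1 t) t) (hdp1 : ∀ t, HasDerivAt p1 (p2 t) t)
    {T : ℝ}
    (s0 : ∀ t, T < |t| → p t = 0) (s1 : ∀ t, T < |t| → p1 t = 0) (s2 : ∀ t, T < |t| → p2 t = 0)
    {x : ℝ} (hx : 0 < x) :
    ((x ^ (1 - w) : ℝ) : ℂ) * ∫ t : ℝ, cexp (I * t * x) *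
        (p t * (G (A + ((1 / x : ℝ) + I * t)) * ((1 / x : ℝ) + I * t : ℂ) ^ (-(w : ℂ)))) =
      ∫ v : ℝ, cexp (I * v) * ((1 + I * v : ℂ) ^ (-((w + 2 : ℝ) : ℂ)) *
        (- EE A w G G1 G2 p p1 p2 (1 / x) (v / x))) := by
  have hp : Continuous p := continuous_iff_continuousAt.2 fun t => (hdp t).continuousAt
  have hp1 : Continuous p1 := continuous_iff_continuousAt.2 fun t => (hdp1 t).continuousAt
  set σ : ℝ := 1 / x with hσ
  have hσ0 : 0 < σ := by positivity
  have hslit : ∀ t : ℝ, (σ + I * t : ℂ) ∈ slitPlane := fun t => by left; simpa using hσ0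
  have hne : ∀ t : ℝ, (σ + I * t : ℂ) ≠ 0 := fun t => slitPlane_ne_zero (hslit t)
  have hre : ∀ t : ℝ, A < (A + (σ + I * t) : ℂ).re := fun t => by simpa using hσ0
  have dz : ∀ t : ℝ, HasDerivAt (fun t : ℝ => (σ + I * t : ℂ)) I t := fun t => by
    simpa using ((Complex.ofRealCLM.hasDerivAt (x := t)).const_mul I).const_add (σ : ℂ)
  have dG : ∀ t : ℝ, HasDerivAt (fun t : ℝ => G (A + (σ + I * t))) (G1 (A + (σ + I * t)) * I) t :=
    fun t => (hd _ (hre t)).1.comp t ((dz t).const_add (A : ℂ))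
  have dG1 : ∀ t : ℝ, HasDerivAt (fun t : ℝ => G1 (A + (σ + I * t)))
      (G2 (A + (σ + I * t)) * I) t :=
    fun t => (hd _ (hre t)).2.comp t ((dz t).const_add (A : ℂ))
  have dpow : ∀ (c : ℂ) (t : ℝ), HasDerivAt (fun t : ℝ => (σ + I * t : ℂ) ^ c)
      (c * (σ + I * t : ℂ) ^ (c - 1) * I) t := by
    intro c t
    have := (hasDerivAt_id' (σ + I * t : ℂ)).cpow_const (c := c) (hslit t)
    rw [mul_one] at this
    exact HasDerivAt.comp t this (dz t)
  have cz : Continuous (fun t : ℝ => (A + (σ + I * t) : ℂ)) := by fun_prop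
  have cG : Continuous (fun t : ℝ => G (A + (σ + I * t))) :=
    continuous_iff_continuousAt.2 fun t => (dG t).continuousAt
  have cG1 : Continuous (fun t : ℝ => G1 (A + (σ + I * t))) :=
    continuous_iff_continuousAt.2 fun t => (dG1 t).continuousAt
  have cG2 : Continuous (fun t : ℝ => G2 (A + (σ + I * t))) :=
    hG2.comp_continuous cz (fun t => (hre t).le)
  have cpw : ∀ c : ℂ, Continuous (fun t : ℝ => (σ + I * t : ℂ) ^ c) := fun c =>
    continuous_iff_continuousAt.2 fun t => (dpow c t).continuousAt
  set u : ℝ → ℂ := fun t => p t * (G (A + (σ + I * t)) * (σ + I * t : ℂ) ^ (-(w : ℂ))) with hu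
  set u1 : ℝ → ℂ := fun t => p1 t * (G (A + (σ + I * t)) * (σ + I * t : ℂ) ^ (-(w : ℂ))) +
    p t * (G1 (A + (σ + I * t)) * I * (σ + I * t : ℂ) ^ (-(w : ℂ)) +
      G (A + (σ + I * t)) * (-(w : ℂ) * (σ + I * t : ℂ) ^ (-(w : ℂ) - 1) * I)) with hu1
  set u2 : ℝ → ℂ := fun t => (σ + I * t : ℂ) ^ (-((w + 2 : ℝ) : ℂ)) *
    EE A w G G1 G2 p p1 p2 σ t with hu2
  have e0 : ∀ t : ℝ, (σ + I * t : ℂ) ^ (-(w : ℂ)) =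
      (σ + I * t : ℂ) ^ (-((w + 2 : ℝ) : ℂ)) * (σ + I * t : ℂ) ^ 2 := by
    intro t
    rw [← cpow_natCast, ← cpow_add _ _ (hne t)]; congr 1; push_cast; ring
  have e1 : ∀ t : ℝ, (σ + I * t : ℂ) ^ (-(w : ℂ) - 1) =
      (σ + I * t : ℂ) ^ (-((w + 2 : ℝ) : ℂ)) * (σ + I * t : ℂ) := by
    intro t
    nth_rw 3 [← cpow_one (σ + I * t : ℂ)]
    rw [← cpow_add _ _ (hne t)]; congr 1; push_cast; ring
  have e2 : ∀ t : ℝ, (σ + I * t : ℂ) ^ (-(w : ℂ) - 1 - 1) =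
      (σ + I * t : ℂ) ^ (-((w + 2 : ℝ) : ℂ)) := by
    intro t
    congr 1; push_cast; ring
  have du : ∀ t, HasDerivAt u (u1 t) t := fun t =>
    (hdp t).mul ((dG t).mul (dpow (-(w : ℂ)) t))
  have du1 : ∀ t, HasDerivAt u1 (u2 t) t := by
    intro t
    have := ((hdp1 t).mul ((dG t).mul (dpow (-(w : ℂ)) t))).add
      ((hdp t).mul ((((dG1 t).mul_const I).mul (dpow (-(w : ℂ)) t)).add
        ((dG t).mul (((dpow (-(w : ℂ) - 1) t).const_mul (-(w : ℂ))).mul_const I))))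
    refine this.congr_deriv ?_
    simp only [hu2, EE, Pi.mul_apply, Pi.add_apply, e0 t, e1 t, e2 t]
    have hI : I ^ 2 = -1 := I_sq
    linear_combination (p t * (σ + I * t : ℂ) ^ (-((w + 2 : ℝ) : ℂ)) *
      (G2 (A + (σ + I * t)) * (σ + I * t : ℂ) ^ 2 - 2 * w * G1 (A + (σ + I * t)) * (σ + I * t : ℂ)
        + w * (w + 1) * G (A + (σ + I * t)))) * hI
  have hint : ∀ v : ℝ → ℂ, Continuous v → (∀ t, T < |t| → v t = 0) → Integrable v := by
    intro v hv hs
    apply hv.integrable_of_hasCompactSupport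
    apply HasCompactSupport.of_support_subset_isCompact (isCompact_Icc (a := -T) (b := T))
    intro t ht
    by_contra hcon
    apply ht
    apply hs
    by_contra hle
    push Not at hle
    exact hcon (abs_le.1 hle)
  have cu : Continuous u := continuous_iff_continuousAt.2 fun t => (du t).continuousAt
  have cu1 : Continuous u1 := continuous_iff_continuousAt.2 fun t => (du1 t).continuousAt
  have cE : Continuous (EE A w G G1 G2 p p1 p2 σ) :=
    (EE_cont (w := w) hG hG1 hG2 hp hp1 hp2).comp_continuous (f := fun t : ℝ => (σ, t))
      (by fun_prop) (fun t => ⟨hσ0.le, mem_univ _⟩)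
  have cu2 : Continuous u2 := (cpw _).mul cE
  have main := parts2 du du1 (hint u cu (fun t ht => by simp [hu, s0 t ht]))
    (hint u1 cu1 (fun t ht => by simp [hu1, s0 t ht, s1 t ht]))
    (hint u2 cu2 (fun t ht => by simp [hu2, EE, s0 t ht, s1 t ht, s2 t ht])) hx.ne'
  rw [main]
  have hsub : ∫ t : ℝ, cexp (I * t * x) * u2 t =
      (x⁻¹ : ℝ) • ∫ v : ℝ, cexp (I * v) * u2 (v / x) := by
    have := Measure.integral_comp_div (fun t : ℝ => cexp (I * t * x) * u2 t) x
    rw [abs_of_pos hx] at this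
    have h2 : ∫ v : ℝ, cexp (I * v) * u2 (v / x) =
        x • ∫ t : ℝ, cexp (I * t * x) * u2 t := by
      rw [← this]; congr 1; ext v; congr 2
      have : (x : ℂ) ≠ 0 := by exact_mod_cast hx.ne'
      push_cast; field_simp
    rw [h2, smul_smul, inv_mul_cancel₀ hx.ne', one_smul]
  rw [hsub, real_smul, ← mul_assoc, ← mul_assoc, ← integral_const_mul]
  congr 1; ext v
  have hz : ((σ : ℂ) + I * ((v / x : ℝ) : ℂ)) = ((x⁻¹ : ℝ) : ℂ) * (1 + I * v) := by
    rw [hσ]; push_cast; ring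
  simp only [hu2]
  rw [hz, real_mul_cpow (by positivity) (slitPlane_ne_zero (re_one_add v))]
  have hc : ((x⁻¹ : ℝ) : ℂ) ^ (-((w + 2 : ℝ) : ℂ)) = ((x ^ (w + 2) : ℝ) : ℂ) := by
    rw [← ofReal_neg, ← ofReal_cpow (by positivity), Real.inv_rpow hx.le, Real.rpow_neg hx.le, inv_inv]
  rw [hc]
  have hxx : (x ^ (1 - w) : ℝ) * (1 / x ^ 2) * x⁻¹ * x ^ (w + 2) = 1 := by
    rw [Real.rpow_sub hx, Real.rpow_add hx]
    have := (Real.rpow_pos_of_pos hx w).ne'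
    simp only [Real.rpow_one, Real.rpow_two]
    field_simp
  have hxx' := congrArg (fun r : ℝ => (r : ℂ)) hxx
  push_cast at hxx'
  push_cast
  linear_combination (-cexp (I * v) * ((1 + I * v : ℂ) ^ (-(w + 2 : ℂ)) *
    EE A w G G1 G2 p p1 p2 σ (v / x))) * hxx'

lemma key {A w : ℝ} (hw : 0 ≤ w) {G G1 G2 : ℂ → ℂ}
    (hG : ContinuousOn G {s : ℂ | A ≤ s.re}) (hG1 : ContinuousOn G1 {s : ℂ | A ≤ s.re})
    (hG2 : ContinuousOn G2 {s : ℂ | A ≤ s.re})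
    (hd : ∀ z : ℂ, A < z.re → HasDerivAt G (G1 z) z ∧ HasDerivAt G1 (G2 z) z) {p p1 p2 : ℝ → ℂ}
    (hp2 : Continuous p2) (hdp : ∀ t, HasDerivAt p (p1 t) t) (hdp1 : ∀ t, HasDerivAt p1 (p2 t) t)
    {T : ℝ}
    (s0 : ∀ t, T < |t| → p t = 0) (s1 : ∀ t, T < |t| → p1 t = 0) (s2 : ∀ t, T < |t| → p2 t = 0) :
    Tendsto (fun x : ℝ => ((x ^ (1 - w) : ℝ) : ℂ) * ∫ t : ℝ, cexp (I * t * x) *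
        (p t * (G (A + ((1 / x : ℝ) + I * t)) * ((1 / x : ℝ) + I * t : ℂ) ^ (-(w : ℂ))))) atTop
      (𝓝 (p 0 * G A * (w * (w + 1) *
        ∫ v : ℝ, cexp (I * v) * (1 + I * v : ℂ) ^ (-((w + 2 : ℝ) : ℂ))))) := by
  have hp : Continuous p := continuous_iff_continuousAt.2 fun t => (hdp t).continuousAt
  have hp1 : Continuous p1 := continuous_iff_continuousAt.2 fun t => (hdp1 t).continuousAt
  have cE := EE_cont (w := w) hG hG1 hG2 hp hp1 hp2
  obtain ⟨M, hM⟩ := EE_bdd (w := w) hG hG1 hG2 hp hp1 hp2 s0 s1 s2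
  have hlim : p 0 * G A * (w * (w + 1) *
        ∫ v : ℝ, cexp (I * v) * (1 + I * v : ℂ) ^ (-((w + 2 : ℝ) : ℂ))) =
      ∫ v : ℝ, cexp (I * v) * ((1 + I * v : ℂ) ^ (-((w + 2 : ℝ) : ℂ)) *
        (- EE A w G G1 G2 p p1 p2 0 0)) := by
    rw [← mul_assoc, ← integral_const_mul]
    congr 1; ext v
    simp [EE]; ring
  rw [hlim]
  have hev : ∀ᶠ x : ℝ in atTop, (∫ v : ℝ, cexp (I * v) * ((1 + I * v : ℂ) ^ (-((w + 2 : ℝ) : ℂ)) *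
        (- EE A w G G1 G2 p p1 p2 (1 / x) (v / x)))) = ((x ^ (1 - w) : ℝ) : ℂ) *
        ∫ t : ℝ, cexp (I * t * x) *
        (p t * (G (A + ((1 / x : ℝ) + I * t)) * ((1 / x : ℝ) + I * t : ℂ) ^ (-(w : ℂ)))) := by
    filter_upwards [eventually_gt_atTop 0] with x hx
    exact (key_ibp hG hG1 hG2 hd hp2 hdp hdp1 s0 s1 s2 hx).symm
  refine Tendsto.congr' hev ?_
  have hn : ∀ v : ℝ, ‖cexp (I * v)‖ = 1 := fun v => by
    rw [mul_comm, norm_exp_ofReal_mul_I]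
  have hcline : Continuous (fun v : ℝ => (1 + I * v : ℂ) ^ (-((w + 2 : ℝ) : ℂ))) :=
    Continuous.cpow (by fun_prop) continuous_const (fun v => re_one_add v)
  apply tendsto_integral_filter_of_dominated_convergence
    (fun v : ℝ => ‖(1 + I * v : ℂ) ^ (-((w + 2 : ℝ) : ℂ))‖ * M)
  · filter_upwards [eventually_gt_atTop 0] with x hx
    apply Continuous.aestronglyMeasurable
    have : Continuous (fun v : ℝ => EE A w G G1 G2 p p1 p2 (1 / x) (v / x)) :=
      cE.comp_continuous (f := fun v : ℝ => ((1 / x : ℝ), v / x)) (by fun_prop)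
        (fun v => ⟨by simp only [mem_Ici]; positivity, mem_univ _⟩)
    fun_prop
  · filter_upwards [eventually_ge_atTop 1] with x hx
    refine Eventually.of_forall fun v => ?_
    rw [norm_mul, hn, one_mul, norm_mul, norm_neg]
    gcongr
    exact hM _ ⟨by positivity, (div_le_one (by positivity)).2 hx⟩ _
  · exact (integrable_line (by linarith)).norm.mul_const M
  · refine Eventually.of_forall fun v => ?_
    apply Tendsto.const_mul
    apply Tendsto.const_mul
    apply Tendsto.neg
    have h1 : ContinuousWithinAt (fun q : ℝ × ℝ => EE A w G G1 G2 p p1 p2 q.1 q.2)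
      (Ici 0 ×ˢ univ) (0, 0) := cE _ ⟨by simp, mem_univ _⟩
    have h2 : Tendsto (fun x : ℝ => ((1 / x : ℝ), v / x)) atTop (𝓝[Ici 0 ×ˢ univ] (0, 0)) := by
      apply tendsto_nhdsWithin_iff.2
      constructor
      · apply Tendsto.prodMk_nhds
        · exact tendsto_const_nhds.div_atTop tendsto_id
        · exact tendsto_const_nhds.div_atTop tendsto_id
      · filter_upwards [eventually_gt_atTop 0] with x hx
        exact ⟨by simp only [mem_Ici]; positivity, mem_univ _⟩
    have h3 := Tendsto.comp h1.tendsto h2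
    simp only [Function.comp_def] at h3
    exact h3
lemma gam_ind {b : ℝ} (hb : 1 < b) (F : ℝ → ℂ) :
    (fun u : ℝ => ((max u 0 ^ (b - 1) : ℝ) : ℂ) * F u) =
      indicator (Ioi 0) (fun u : ℝ => ((u ^ (b - 1) : ℝ) : ℂ) * F u) := by
  ext u
  by_cases hu : 0 < u
  · rw [indicator_of_mem (by exact hu), max_eq_left hu.le]
  · rw [indicator_of_notMem (by exact hu), max_eq_right (not_lt.1 hu),
      Real.zero_rpow (by linarith)]
    simp

lemma gam_int {b : ℝ} (hb : 1 < b) {r : ℝ} (hr : 0 < r) :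
    Integrable (fun u : ℝ => ((max u 0 ^ (b - 1) : ℝ) : ℂ) * ((Real.exp (-(r * u)) : ℝ) : ℂ)) := by
  rw [gam_ind hb (fun u => ((Real.exp (-(r * u)) : ℝ) : ℂ)),
    integrable_indicator_iff measurableSet_Ioi]
  have := integrableOn_rpow_mul_exp_neg_mul_rpow (p := 1) (s := b - 1) (b := r) (by linarith)
    one_pos hr
  refine (this.ofReal (𝕜 := ℂ)).congr (Eventually.of_forall fun u => ?_)
  simp

lemma gam_real {b : ℝ} (hb : 1 < b) {r : ℝ} (hr : 0 < r) :
    ∫ u : ℝ, ((max u 0 ^ (b - 1) : ℝ) : ℂ) * ((Real.exp (-(r * u)) : ℝ) : ℂ) =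
      (r : ℂ) ^ (-(b : ℂ)) * Real.Gamma b := by
  rw [gam_ind hb (fun u => ((Real.exp (-(r * u)) : ℝ) : ℂ)), integral_indicator measurableSet_Ioi]
  have := Real.integral_rpow_mul_exp_neg_mul_Ioi (a := b) (by linarith) hr
  have h2 := congrArg (fun r : ℝ => (r : ℂ)) this
  rw [← integral_complex_ofReal] at h2
  simp only [ofReal_mul] at h2
  rw [h2, ← ofReal_neg, ← ofReal_cpow hr.le, one_div, Real.inv_rpow hr.le, Real.rpow_neg hr.le]

lemma gam {b : ℝ} (hb : 1 < b) {z : ℂ} (hz : 0 < z.re) :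
    ∫ u : ℝ, ((max u 0 ^ (b - 1) : ℝ) : ℂ) * cexp (-(z * u)) = z ^ (-(b : ℂ)) * Real.Gamma b := by
  set μ : Measure ℝ := volume.withDensity (fun u => ENNReal.ofReal (max u 0 ^ (b - 1))) with hμ
  have hm : Measurable (fun u : ℝ => ENNReal.ofReal (max u 0 ^ (b - 1))) := by fun_prop
  have hnn : ∀ u : ℝ, (0 : ℝ) ≤ max u 0 ^ (b - 1) := fun u => by positivity
  have hI : ∀ F : ℝ → ℂ, ∫ u, F u ∂μ = ∫ u : ℝ, ((max u 0 ^ (b - 1) : ℝ) : ℂ) * F u := by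
    intro F
    rw [hμ, integral_withDensity_eq_integral_toReal_smul hm (by simp)]
    congr 1; ext u; rw [ENNReal.toReal_ofReal (hnn u), real_smul]
  have hset : Iio 0 ⊆ ProbabilityTheory.integrableExpSet id μ := by
    intro t ht
    change Integrable (fun u : ℝ => Real.exp (t * id u)) μ
    rw [hμ, integrable_withDensity_iff_integrable_smul' hm (by simp)]
    have := (gam_int hb (r := -t) (by simpa using ht)).re
    refine this.congr (Eventually.of_forall fun u => ?_)
    simp only [ENNReal.toReal_ofReal (hnn u), id]
    rw [← ofReal_mul]
    simp [-ofReal_mul]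
  have hint : ∀ y : ℂ, 0 < y.re →
      (-y).re ∈ interior (ProbabilityTheory.integrableExpSet id μ) := by
    intro y hy
    exact interior_mono hset (by rw [interior_Iio]; simpa using hy)
  have hA : AnalyticOnNhd ℂ (fun y => ProbabilityTheory.complexMGF id μ (-y)) {y : ℂ | 0 < y.re} :=
    fun y hy => AnalyticAt.comp (f := fun y : ℂ => -y)
      (ProbabilityTheory.analyticAt_complexMGF (hint y hy)) analyticAt_id.neg
  have hB : AnalyticOnNhd ℂ (fun y : ℂ => y ^ (-(b : ℂ)) * Real.Gamma b) {y : ℂ | 0 < y.re} :=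
    fun y hy => (analyticAt_id.cpow analyticAt_const (Or.inl hy)).mul analyticAt_const
  have hpre : IsPreconnected {y : ℂ | 0 < y.re} := (convex_halfSpace_re_gt 0).isPreconnected
  have hE := hA.eqOn_of_preconnected_of_frequently_eq hB hpre (z₀ := 1) (by simp) (by
    have ht : Tendsto (fun n : ℕ => (((1 : ℝ) + 1 / ((n : ℝ) + 1) : ℝ) : ℂ)) atTop (𝓝[≠] 1) := by
      apply tendsto_nhdsWithin_iff.2
      constructor
      · have := (tendsto_one_div_add_atTop_nhds_zero_nat (𝕜 := ℝ)).const_add 1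
        have h2 := (continuous_ofReal.tendsto _).comp this
        simpa [Function.comp_def] using h2
      · refine Eventually.of_forall fun n => ?_
        have : (0 : ℝ) < 1 / ((n : ℝ) + 1) := by positivity
        simp only [mem_compl_iff, mem_singleton_iff]
        intro h
        have h' : (1 : ℝ) + 1 / ((n : ℝ) + 1) = 1 := by exact_mod_cast h
        linarith
    refine ht.frequently (Frequently.of_forall fun n => ?_)
    have hpos : (0 : ℝ) < 1 + 1 / ((n : ℝ) + 1) := by positivity
    rw [← gam_real hb hpos, ProbabilityTheory.complexMGF, hI]
    congr 1; ext u; congr 1; rw [ofReal_exp]; congr 1; push_cast; simp only [id]; ring)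
  have := hE hz
  simp only [ProbabilityTheory.complexMGF] at this
  rw [hI] at this
  rw [← this]
  congr 1; ext u; simp

open FourierTransform in
lemma gamma_const {w : ℝ} (hw : 0 < w) :
    (w * (w + 1) : ℂ) * ∫ v : ℝ, cexp (I * v) * (1 + I * v : ℂ) ^ (-((w + 2 : ℝ) : ℂ)) =
      2 * Real.pi * Real.exp (-1) / Real.Gamma w := by
  set b := w + 2 with hb
  have hb1 : 1 < b := by linarith
  set φ : ℝ → ℂ := fun u => ((max u 0 ^ (b - 1) : ℝ) : ℂ) * ((Real.exp (-(1 * u)) : ℝ) : ℂ) with hφ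
  have hφi : Integrable φ := gam_int hb1 one_pos
  have hφc : Continuous φ := by
    have : Continuous (fun u : ℝ => (max u 0 ^ (b - 1) : ℝ)) :=
      Continuous.rpow_const (by fun_prop) (fun u => Or.inr (by linarith))
    fun_prop
  have hF : 𝓕 φ = fun ξ : ℝ => (1 + I * ((2 * Real.pi * ξ : ℝ) : ℂ)) ^ (-(b : ℂ)) * Real.Gamma b := by
    ext ξ
    rw [← gam hb1 (z := 1 + I * ((2 * Real.pi * ξ : ℝ) : ℂ)) (by simp), Real.fourier_real_eq_integral_exp_smul]
    congr 1; ext u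
    simp only [hφ, smul_eq_mul]
    rw [mul_left_comm, ofReal_exp, ← Complex.exp_add]
    congr 2; push_cast; ring
  have h2pi : (2 * Real.pi) ≠ 0 := by positivity
  have hFi : Integrable (𝓕 φ) := by
    rw [hF]
    exact ((integrable_line hb1).comp_mul_left' h2pi).mul_const _
  have hinv := congrFun (hφc.fourierInv_fourier_eq hφi hFi) 1
  rw [Real.fourierInv_eq'] at hinv
  have h1 : φ 1 = Real.exp (-1) := by simp [hφ]
  rw [h1, hF] at hinv
  have hcv := Measure.integral_comp_mul_left
    (fun v : ℝ => cexp (I * v) * (1 + I * v : ℂ) ^ (-(b : ℂ)) * Real.Gamma b) (2 * Real.pi)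
  have h3 : ∫ v : ℝ, cexp (((2 * Real.pi * inner ℝ v 1 : ℝ) : ℂ) * I) • ((1 + I * ((2 * Real.pi * v : ℝ) : ℂ)) ^ (-(b : ℂ)) * Real.Gamma b : ℂ)
     = ∫ v : ℝ, cexp (I * ((2 * Real.pi * v : ℝ) : ℂ)) * (1 + I * ((2 * Real.pi * v : ℝ) : ℂ)) ^ (-(b : ℂ)) * Real.Gamma b := by
    congr 1; ext v
    have hin : inner ℝ v (1:ℝ) = v := by simp
    rw [smul_eq_mul, hin, mul_comm _ I]
    ring
  rw [h3, hcv, integral_mul_const, abs_of_pos (by positivity), real_smul] at hinv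
  have hG : Real.Gamma b = (w + 1) * (w * Real.Gamma w) := by
    rw [hb, show w + 2 = (w + 1) + 1 by ring, Real.Gamma_add_one (by positivity),
      Real.Gamma_add_one hw.ne']
  rw [hG] at hinv
  have hgw : (Real.Gamma w : ℂ) ≠ 0 := by exact_mod_cast (Real.Gamma_pos_of_pos hw).ne'
  have hpi : (Real.pi : ℂ) ≠ 0 := by exact_mod_cast Real.pi_ne_zero
  rw [← hinv]
  push_cast
  field_simp

noncomputable def KK (p : ℝ → ℂ) (y : ℝ) : ℂ := ∫ t : ℝ, p t * cexp (I * t * y)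

lemma nat_cpow {n : ℕ} (hn : n ≠ 0) (A x t : ℝ) :
    (n : ℂ) ^ (-((A : ℂ) + ((1 / x : ℝ) + I * t))) =
      (((n : ℝ) ^ (-A) * Real.exp (-(Real.log n / x)) : ℝ) : ℂ) * cexp (-(I * t * Real.log n)) := by
  have hn' : (n : ℂ) ≠ 0 := by exact_mod_cast hn
  have hn0 : (0 : ℝ) < n := by exact_mod_cast Nat.pos_of_ne_zero hn
  rw [cpow_def_of_ne_zero hn', Real.rpow_def_of_pos hn0, ← Real.exp_add, ofReal_exp,
    ← Complex.exp_add, ← Complex.ofReal_natCast, ← ofReal_log hn0.le]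
  congr 1; push_cast; ring

lemma swap {a : ℕ → ℝ} (ha0 : a 0 = 0) {A : ℝ} {f : ℂ → ℂ}
    (hconv : ∀ s : ℂ, A < s.re → Summable fun n : ℕ => ‖(a n : ℂ) * (n : ℂ) ^ (-s)‖)
    (hf : ∀ s : ℂ, A < s.re → f s = ∑' n : ℕ, (a n : ℂ) * (n : ℂ) ^ (-s))
    {p : ℝ → ℂ} (hp : Integrable p) {x : ℝ} (hx : 0 < x) :
    HasSum (fun n : ℕ => ((a n * (n : ℝ) ^ (-A) * Real.exp (-(Real.log n / x)) : ℝ) : ℂ) *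
        KK p (x - Real.log n))
      (∫ t : ℝ, cexp (I * t * x) * (p t * f (A + ((1 / x : ℝ) + I * t)))) := by
  set c : ℕ → ℝ := fun n => a n * (n : ℝ) ^ (-A) * Real.exp (-(Real.log n / x)) with hc
  have hs : ∀ t : ℝ, A < (A + ((1 / x : ℝ) + I * t) : ℂ).re := by
    intro t; simp; positivity
  have hterm : ∀ (n : ℕ) (t : ℝ), (a n : ℂ) * (n : ℂ) ^ (-((A : ℂ) + ((1 / x : ℝ) + I * t))) =
      (c n : ℂ) * cexp (-(I * t * Real.log n)) := by
    intro n t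
    by_cases hn : n = 0
    · simp [hn, hc, ha0]
    · rw [nat_cpow hn, hc]; push_cast; ring
  have hn1 : ∀ y : ℝ, ∀ t : ℝ, ‖cexp (I * t * y)‖ = 1 := by
    intro y t
    rw [show I * t * y = ((t * y : ℝ) : ℂ) * I by push_cast; ring, norm_exp_ofReal_mul_I]
  have hcs : Summable fun n => ‖(c n : ℂ)‖ := by
    refine (hconv _ (hs 0)).congr fun n => ?_
    rw [hterm]; simp
  set F : ℕ → ℝ → ℂ := fun n t => (c n : ℂ) * (p t * cexp (I * t * (x - Real.log n : ℝ))) with hF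
  have hFn : ∀ n t, ‖F n t‖ = ‖(c n : ℂ)‖ * ‖p t‖ := by
    intro n t; simp only [hF, norm_mul, hn1, mul_one]
  have hFi : ∀ n, Integrable (F n) := by
    intro n
    refine Integrable.const_mul ?_ _
    refine hp.mul_bdd (c := 1) (by fun_prop) (Eventually.of_forall fun t => (hn1 _ t).le)
  have := hasSum_integral_of_summable_integral_norm hFi (by
    simp_rw [hFn, integral_const_mul]
    exact hcs.mul_right _)
  have e1 : (fun n : ℕ => ((a n * (n : ℝ) ^ (-A) * Real.exp (-(Real.log n / x)) : ℝ) : ℂ) *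
        KK p (x - Real.log n)) = fun n => ∫ t : ℝ, F n t := by
    ext n; simp only [hF, integral_const_mul, KK]; rfl
  have e2 : (∫ t : ℝ, cexp (I * t * x) * (p t * f (A + ((1 / x : ℝ) + I * t)))) =
      ∫ t : ℝ, ∑' n, F n t := by
    congr 1; ext t
    rw [hf _ (hs t)]
    simp_rw [hterm]
    rw [← mul_assoc, ← tsum_mul_left]
    congr 1; ext n
    simp only [hF]
    have : cexp (I * t * (x - Real.log n : ℝ)) = cexp (I * t * x) * cexp (-(I * t * Real.log n)) := by
      rw [← Complex.exp_add]; congr 1; push_cast; ring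
    rw [this]; ring
  rw [e1, e2]
  exact this

lemma lim5 {a : ℕ → ℝ} (ha0 : a 0 = 0) {A : ℝ} {f g h : ℂ → ℂ} {w : ℝ} (hw : 0 < w)
    (hconv : ∀ s : ℂ, A < s.re → Summable fun n : ℕ => ‖(a n : ℂ) * (n : ℂ) ^ (-s)‖)
    (hf : ∀ s : ℂ, A < s.re → f s = ∑' n : ℕ, (a n : ℂ) * (n : ℂ) ^ (-s))
    (hg : AnalyticOn ℂ g {s : ℂ | A ≤ s.re})
    (hh : AnalyticOn ℂ h {s : ℂ | A ≤ s.re})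
    (heq : ∀ s : ℂ, A < s.re → f s = g s * (s - (A : ℂ)) ^ (-(w : ℂ)) + h s)
    {p : ℝ → ℂ} (hp : ContDiff ℝ 2 p) (hps : HasCompactSupport p) :
    Tendsto (fun x : ℝ => ((x ^ (1 - w) : ℝ) : ℂ) * ∑' n : ℕ,
      ((a n * (n : ℝ) ^ (-A) * Real.exp (-(Real.log n / x)) : ℝ) : ℂ) *
        KK p (x - Real.log n)) atTop
      (𝓝 (p 0 * g A * (2 * Real.pi * Real.exp (-1) / Real.Gamma w))) := by
  have hp1 : ContDiff ℝ 1 (deriv p) := by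
    have : ContDiff ℝ (1 + 1) p := by convert hp using 1; norm_num
    exact (contDiff_succ_iff_deriv.1 this).2.2
  have hp2 : Continuous (deriv (deriv p)) := hp1.continuous_deriv le_rfl
  have hdp : ∀ t, HasDerivAt p (deriv p t) t := fun t =>
    (hp.differentiable (by norm_num) t).hasDerivAt
  have hdp1 : ∀ t, HasDerivAt (deriv p) (deriv (deriv p) t) t := fun t =>
    (hp1.differentiable (by norm_num) t).hasDerivAt
  obtain ⟨T, hT⟩ := hps.isCompact.isBounded.exists_norm_le
  have ht0 : ∀ t, T < |t| → t ∉ tsupport p := fun t ht h => absurd (hT t h) (not_le.2 ht)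
  have s0 : ∀ t, T < |t| → p t = 0 := fun t ht => image_eq_zero_of_notMem_tsupport (ht0 t ht)
  have s1 : ∀ t, T < |t| → deriv p t = 0 := fun t ht =>
    image_eq_zero_of_notMem_tsupport fun h => ht0 t ht (tsupport_deriv_subset h)
  have s2 : ∀ t, T < |t| → deriv (deriv p) t = 0 := fun t ht =>
    image_eq_zero_of_notMem_tsupport fun h =>
      ht0 t ht (tsupport_deriv_subset (tsupport_deriv_subset h))
  obtain ⟨g1, g2, cg, cg1, cg2, dg⟩ := smooth_data hg
  obtain ⟨h1, h2, ch, ch1, ch2, dh⟩ := smooth_data hh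
  have kg := key hw.le cg cg1 cg2 dg hp2 hdp hdp1 s0 s1 s2
  have kh := key le_rfl ch ch1 ch2 dh hp2 hdp hdp1 s0 s1 s2
  rw [gamma_const hw] at kg
  have kx : Tendsto (fun x : ℝ => ((x ^ (-w) : ℝ) : ℂ)) atTop (𝓝 ((0 : ℝ) : ℂ)) :=
    (continuous_ofReal.tendsto _).comp (tendsto_rpow_neg_atTop hw)
  have kk := kg.add (kx.mul kh)
  have e0 : p 0 * g A * (2 * Real.pi * Real.exp (-1) / Real.Gamma w) + ((0 : ℝ) : ℂ) *
    (p 0 * h A * (((0 : ℝ) : ℂ) * (((0 : ℝ) : ℂ) + 1) *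
        ∫ v : ℝ, cexp (I * v) * (1 + I * v : ℂ) ^ (-((0 + 2 : ℝ) : ℂ)))) =
      p 0 * g A * (2 * Real.pi * Real.exp (-1) / Real.Gamma w) := by simp
  rw [e0] at kk
  refine kk.congr' ?_
  filter_upwards [eventually_gt_atTop 0] with x hx
  rw [(swap ha0 hconv hf (hp.continuous.integrable_of_hasCompactSupport hps) hx).tsum_eq]
  have hre : ∀ t : ℝ, A < (A + ((1 / x : ℝ) + I * t) : ℂ).re := by
    intro t; simp; positivity
  have hpath : Continuous (fun t : ℝ => (A + ((1 / x : ℝ) + I * t) : ℂ)) := by fun_prop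
  have cgt : Continuous (fun t : ℝ => g (A + ((1 / x : ℝ) + I * t))) :=
    cg.comp_continuous hpath (fun t => (hre t).le)
  have cht : Continuous (fun t : ℝ => h (A + ((1 / x : ℝ) + I * t))) :=
    ch.comp_continuous hpath (fun t => (hre t).le)
  have cpt : Continuous (fun t : ℝ => ((1 / x : ℝ) + I * t : ℂ) ^ (-(w : ℂ))) := by
    refine Continuous.cpow (by fun_prop) continuous_const fun t => ?_
    left; simp; exact hx
  have hpc := hp.continuous
  have hec : Continuous fun t : ℝ => cexp (I * t * x) := by fun_prop
  have i1 : Integrable fun t : ℝ => cexp (I * t * x) *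
        (p t * (g (A + ((1 / x : ℝ) + I * t)) * ((1 / x : ℝ) + I * t : ℂ) ^ (-(w : ℂ)))) := by
    refine Continuous.integrable_of_hasCompactSupport (hec.mul (hpc.mul (cgt.mul cpt))) ?_
    exact (hps.mul_right).mul_left
  have i2 : Integrable fun t : ℝ => cexp (I * t * x) *
        (p t * (h (A + ((1 / x : ℝ) + I * t)))) := by
    refine Continuous.integrable_of_hasCompactSupport (hec.mul (hpc.mul cht)) ?_
    exact (hps.mul_right).mul_left
  have i3 : (∫ t : ℝ, cexp (I * t * x) * (p t * f (A + ((1 / x : ℝ) + I * t)))) =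
     (∫ t : ℝ, cexp (I * t * x) *
        (p t * (g (A + ((1 / x : ℝ) + I * t)) * ((1 / x : ℝ) + I * t : ℂ) ^ (-(w : ℂ))))) +
     ∫ t : ℝ, cexp (I * t * x) *
        (p t * (h (A + ((1 / x : ℝ) + I * t)))) := by
    rw [← integral_add i1 i2]
    congr 1; ext t
    rw [heq _ (hre t), add_sub_cancel_left]; ring
  rw [i3, mul_add, ← mul_assoc, ← ofReal_mul, ← Real.rpow_add hx]
  congr 2
  · congr 2; ring
  · simp

open FourierTransform in
lemma KK_eq (p : ℝ → ℂ) (y : ℝ) : KK p y = 𝓕 p (-(1 / (2 * Real.pi)) * y) := by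
  rw [Real.fourier_real_eq_integral_exp_smul, KK]
  congr 1; ext t
  rw [smul_eq_mul, mul_comm]
  congr 2
  have hpi : (Real.pi : ℂ) ≠ 0 := by exact_mod_cast Real.pi_ne_zero
  push_cast
  field_simp

open FourierTransform in
lemma KK_inv {p : ℝ → ℂ} (hp : ContDiff ℝ (⊤ : ℕ∞) p) (hps : HasCompactSupport p) :
    Continuous (KK p) ∧ Integrable (KK p) ∧
      ∀ ξ : ℝ, ∫ y : ℝ, KK p y * cexp (I * ξ * y) = 2 * Real.pi * p (-ξ) := by
  set P := hps.toSchwartzMap hp with hP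
  have hPp : (P : ℝ → ℂ) = p := by ext t; simp [hP]
  have hF : 𝓕 p = ((𝓕 P : SchwartzMap ℝ ℂ) : ℝ → ℂ) := by
    rw [SchwartzMap.fourier_coe, hPp]
  have hcF : Continuous (𝓕 p) := by rw [hF]; exact SchwartzMap.continuous _
  have hiF : Integrable (𝓕 p) := by rw [hF]; exact SchwartzMap.integrable _
  have hip : Integrable p := hp.continuous.integrable_of_hasCompactSupport hps
  have hK : KK p = fun y => 𝓕 p (-(1 / (2 * Real.pi)) * y) := funext (KK_eq p)
  have hne : -(1 / (2 * Real.pi)) ≠ 0 := by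
    have := Real.pi_pos
    have : 0 < 1 / (2 * Real.pi) := by positivity
    linarith
  refine ⟨by rw [hK]; fun_prop, by rw [hK]; exact hiF.comp_mul_left' hne, fun ξ => ?_⟩
  have hinv := congrFun (hp.continuous.fourierInv_fourier_eq hip hiF) (-ξ)
  rw [Real.fourierInv_eq'] at hinv
  have hcv := Measure.integral_comp_mul_left
    (fun v : ℝ => 𝓕 p v * cexp (((2 * Real.pi * (v * (-ξ)) : ℝ) : ℂ) * I)) (-(1 / (2 * Real.pi)))
  have e1 : ∫ y : ℝ, KK p y * cexp (I * ξ * y) = ∫ y : ℝ, (fun v : ℝ => 𝓕 p v * cexp (((2 * Real.pi * (v * (-ξ)) : ℝ) : ℂ) * I)) (-(1 / (2 * Real.pi)) * y) := by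
    congr 1; ext y
    rw [KK_eq]
    congr 2
    have hpi : (Real.pi : ℂ) ≠ 0 := by exact_mod_cast Real.pi_ne_zero
    push_cast
    field_simp
  rw [e1, hcv, ← hinv, real_smul]
  congr 1
  · have : |(-(1 / (2 * Real.pi)))⁻¹| = 2 * Real.pi := by
      rw [abs_inv, abs_neg, abs_of_pos (by positivity)]; field_simp
    rw [this]; push_cast; ring
  · congr 1; ext v
    have hin : inner ℝ v (-ξ) = v * (-ξ) := by simp [mul_comm]
    rw [hin, smul_eq_mul, mul_comm]

lemma KK_norm_le {p : ℝ → ℂ} (y : ℝ) : ‖KK p y‖ ≤ ∫ t, ‖p t‖ := by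
  refine (norm_integral_le_integral_norm _).trans_eq ?_
  congr 1; ext t
  rw [norm_mul, show I * t * y = ((t * y : ℝ) : ℂ) * I by push_cast; ring,
    norm_exp_ofReal_mul_I, mul_one]

lemma exp_abs_int {A : ℝ} (hA : 0 < A) : Integrable (fun u : ℝ => Real.exp (-A * |u|)) := by
  rw [← integrableOn_univ, ← Iic_union_Ioi (a := (0 : ℝ))]
  refine IntegrableOn.union ?_ ?_
  · refine (integrableOn_exp_mul_Iic hA 0).congr_fun (fun u hu => ?_) measurableSet_Iic
    simp only [abs_of_nonpos (show u ≤ 0 from hu)]; ring_nf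
  · refine (integrableOn_exp_mul_Ioi (neg_lt_zero.2 hA) 0).congr_fun (fun u hu => ?_)
      measurableSet_Ioi
    simp only [abs_of_pos (show 0 < u from hu)]

lemma exp_abs_ft {A : ℝ} (hA : 0 < A) (t : ℝ) :
    ∫ u : ℝ, ((Real.exp (-A * |u|) : ℝ) : ℂ) * cexp (-(I * t * u)) =
      1 / (A - I * t) + 1 / (A + I * t) := by
  have hi : Integrable (fun u : ℝ => ((Real.exp (-A * |u|) : ℝ) : ℂ) * cexp (-(I * t * u))) := by
    refine (exp_abs_int hA).ofReal.mul_bdd (c := 1) (by fun_prop) (Eventually.of_forall fun u => ?_)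
    rw [show -(I * t * u) = ((-(t * u) : ℝ) : ℂ) * I by push_cast; ring, norm_exp_ofReal_mul_I]
  have hsplit := intervalIntegral.integral_Iic_add_Ioi (b := (0:ℝ)) hi.integrableOn hi.integrableOn
  rw [← hsplit]
  congr 1
  · rw [setIntegral_congr_fun (g := fun u : ℝ => cexp ((A - I * t) * u)) measurableSet_Iic,
      integral_exp_mul_complex_Iic (by simpa using hA)]
    · simp
    · intro u hu
      simp only [abs_of_nonpos (show u ≤ 0 from hu)]
      rw [ofReal_exp, ← Complex.exp_add]; congr 1; push_cast; ring
  · rw [setIntegral_congr_fun (g := fun u : ℝ => cexp ((-A - I * t) * u)) measurableSet_Ioi,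
      integral_exp_mul_complex_Ioi (by simpa using hA)]
    · simp
      rw [show (-A - I * t : ℂ) = -(A + I * t) by ring, neg_div_neg_eq, one_div]
    · intro u hu
      simp only [abs_of_pos (show 0 < u from hu)]
      rw [ofReal_exp, ← Complex.exp_add]; congr 1; push_cast; ring

open FourierTransform Convolution in
lemma exists_q : ∃ (q : ℝ → ℂ) (R : ℝ → ℝ), ContDiff ℝ (⊤ : ℕ∞) q ∧ HasCompactSupport q ∧
    Continuous R ∧ (∀ y, 0 ≤ R y) ∧ 0 < R 0 ∧ ∀ y, KK q y = R y := by
  let b : ContDiffBump (0 : ℝ) := ⟨1, 2, one_pos, one_lt_two⟩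
  set φ : ℝ → ℂ := fun t => ((b t : ℝ) : ℂ) with hφ
  have hφs : ContDiff ℝ (⊤ : ℕ∞) φ := ofRealCLM.contDiff.comp b.contDiff
  have hφc : HasCompactSupport φ := b.hasCompactSupport.comp_left (g := fun r : ℝ => (r : ℂ)) (by simp)
  have hφi : Integrable φ := hφs.continuous.integrable_of_hasCompactSupport hφc
  set q := φ ⋆[ContinuousLinearMap.mul ℝ ℂ] φ with hq
  have hqs : ContDiff ℝ (⊤ : ℕ∞) q :=
    hφc.contDiff_convolution_right _ hφs.continuous.locallyIntegrable hφs
  have hqc : HasCompactSupport q := hφc.convolution _ hφc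
  have hKq : ∀ y, KK q y = KK φ y * KK φ y := by
    intro y
    rw [KK_eq, KK_eq]
    exact Real.fourier_mul_convolution_eq hφi hφi _
  have hreal : ∀ y, KK φ y = ((KK φ y).re : ℂ) := by
    intro y
    refine (conj_eq_iff_re.1 ?_).symm
    rw [KK, ← integral_conj, ← integral_neg_eq_self]
    congr 1; ext t
    simp only [hφ, map_mul, conj_ofReal, b.neg, ← Complex.exp_conj, conj_I]
    congr 2; push_cast; ring
  refine ⟨q, fun y => (KK φ y).re ^ 2, hqs, hqc, ?_, fun y => sq_nonneg _, ?_, fun y => ?_⟩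
  · exact (continuous_re.comp (KK_inv hφs hφc).1).pow 2
  · have : KK φ 0 = ((∫ t, b t : ℝ) : ℂ) := by
      rw [KK, ← integral_complex_ofReal]; congr 1; ext t; simp [hφ]
    change 0 < (KK φ 0).re ^ 2
    rw [this, ofReal_re]
    have := b.integral_pos (μ := volume)
    positivity
  · rw [hKq, hreal y]; push_cast; ring

lemma exists_kernel {A : ℝ} (hA : 0 < A) : ∃ (p : ℝ → ℂ) (K : ℝ → ℝ) (c : ℝ),
    ContDiff ℝ (⊤ : ℕ∞) p ∧ HasCompactSupport p ∧ (∀ y, KK p y = K y) ∧ Continuous K ∧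
    Integrable K ∧ 0 < c ∧ (∀ y, c * Real.exp (-A * |y|) ≤ K y) ∧
    ∀ ξ : ℝ, ∫ y : ℝ, (K y : ℂ) * cexp (I * ξ * y) = 2 * Real.pi * p (-ξ) := by
  obtain ⟨q, R, hq, hqc, hR, hR0, hRp, hKq⟩ := exists_q
  have hqi : Integrable q := hq.continuous.integrable_of_hasCompactSupport hqc
  set r : ℝ → ℂ := fun t => 1 / (A - I * t) + 1 / (A + I * t) with hr
  have hrs : ContDiff ℝ (⊤ : ℕ∞) r := by
    have h1 : ContDiff ℝ (⊤ : ℕ∞) (fun t : ℝ => (A - I * t : ℂ)) :=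
      contDiff_const.sub (contDiff_const.mul ofRealCLM.contDiff)
    have h2 : ContDiff ℝ (⊤ : ℕ∞) (fun t : ℝ => (A + I * t : ℂ)) :=
      contDiff_const.add (contDiff_const.mul ofRealCLM.contDiff)
    have n1 : ∀ t : ℝ, (A - I * t : ℂ) ≠ 0 := fun t h => by
      have := congrArg re h; simp at this; linarith
    have n2 : ∀ t : ℝ, (A + I * t : ℂ) ≠ 0 := fun t h => by
      have := congrArg re h; simp at this; linarith
    have h3 : ContDiff ℝ (⊤ : ℕ∞) (fun t : ℝ => (1 / (A - I * t) : ℂ)) :=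
      by simp only [one_div]; exact h1.inv n1
    have h4 : ContDiff ℝ (⊤ : ℕ∞) (fun t : ℝ => (1 / (A + I * t) : ℂ)) :=
      by simp only [one_div]; exact h2.inv n2
    exact h3.add h4
  have hps : ContDiff ℝ (⊤ : ℕ∞) (fun t => q t * r t) := hq.mul hrs
  have hpc : HasCompactSupport (fun t => q t * r t) := hqc.mul_right
  obtain ⟨kc, ki, kinv⟩ := KK_inv hps hpc
  have hKr : ∀ y, KK (fun t => q t * r t) y = ((∫ u : ℝ, Real.exp (-A * |u|) * R (y - u) : ℝ) : ℂ) := by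
    intro y
    rw [← integral_complex_ofReal, KK]
    have hF : Integrable (Function.uncurry fun (t u : ℝ) => (q t * cexp (I * t * y)) *
        (((Real.exp (-A * |u|) : ℝ) : ℂ) * cexp (-(I * t * u)))) (volume.prod volume) := by
      have h1 := hqi.mul_prod (exp_abs_int hA).ofReal (L := ℂ)
      have h2 := h1.mul_bdd (c := 1) (g := fun z : ℝ × ℝ => cexp (I * z.1 * y) * cexp (-(I * z.1 * z.2)))
        (by fun_prop) (Eventually.of_forall fun z => by
          rw [← Complex.exp_add, show I * z.1 * y + -(I * z.1 * z.2) = ((z.1 * y - z.1 * z.2 : ℝ) : ℂ) * I by push_cast; ring,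
            norm_exp_ofReal_mul_I])
      refine h2.congr (Eventually.of_forall fun z => ?_)
      simp only [Function.uncurry]
      simp only [RCLike.ofReal_eq_complex_ofReal]
      ring
    calc ∫ t : ℝ, q t * r t * cexp (I * t * y) = ∫ t : ℝ, ∫ u : ℝ, (q t * cexp (I * t * y)) *
        (((Real.exp (-A * |u|) : ℝ) : ℂ) * cexp (-(I * t * u))) := by
          congr 1; ext t; rw [integral_const_mul, exp_abs_ft hA]; simp only [hr]; ring
      _ = ∫ u : ℝ, ∫ t : ℝ, (q t * cexp (I * t * y)) *
        (((Real.exp (-A * |u|) : ℝ) : ℂ) * cexp (-(I * t * u))) := integral_integral_swap hF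
      _ = _ := by
          congr 1; ext u
          push_cast
          rw [← hKq, KK, ← integral_const_mul]
          congr 1; ext t
          have : cexp (I * t * (y - u : ℝ)) = cexp (I * t * y) * cexp (-(I * t * u)) := by
            rw [← Complex.exp_add]; congr 1; push_cast; ring
          rw [this]; push_cast; ring
  set K : ℝ → ℝ := fun y => ∫ u : ℝ, Real.exp (-A * |u|) * R (y - u) with hK
  have hKre : K = fun y => (KK (fun t => q t * r t) y).re := by
    ext y; rw [hKr, ofReal_re]
  have hRb : ∀ y, ‖R y‖ ≤ ∫ t, ‖q t‖ := by
    intro y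
    have := KK_norm_le (p := q) y
    rwa [hKq, norm_real] at this
  -- lower bound near zero
  obtain ⟨η, hη, hη2⟩ : ∃ η > 0, ∀ y, |y| ≤ η → R 0 / 2 ≤ R y := by
    have := (hR.tendsto 0).eventually (lt_mem_nhds (half_lt_self hRp))
    obtain ⟨ε, hε, h⟩ := Metric.eventually_nhds_iff.1 this
    refine ⟨ε / 2, by positivity, fun y hy => (h ?_).le⟩
    rw [Real.dist_eq, sub_zero]; linarith
  refine ⟨_, K, Real.exp (-A * η) * (R 0 / 2) * (2 * η), hps, hpc, hKr, ?_, ?_, by positivity, ?_, ?_⟩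
  · rw [hKre]; exact continuous_re.comp kc
  · rw [hKre]; exact ki.re
  · intro y
    have hint : Integrable (fun u : ℝ => Real.exp (-A * |u|) * R (y - u)) :=
      (exp_abs_int hA).mul_bdd (c := ∫ t, ‖q t‖) (by fun_prop) (Eventually.of_forall fun u => hRb _)
    have h1 : ∫ u in Icc (y - η) (y + η), Real.exp (-A * |u|) * R (y - u) ≤ K y :=
      setIntegral_le_integral hint (Eventually.of_forall fun u => mul_nonneg (Real.exp_pos _).le (hR0 _))
    refine le_trans ?_ h1
    have h2 : ∫ u in Icc (y - η) (y + η), (Real.exp (-A * η) * Real.exp (-A * |y|) * (R 0 / 2)) ≤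
        ∫ u in Icc (y - η) (y + η), Real.exp (-A * |u|) * R (y - u) := by
      refine setIntegral_mono_on (continuous_const.integrableOn_Icc) hint.integrableOn measurableSet_Icc fun u hu => ?_
      have hyu : |y - u| ≤ η := abs_le.2 ⟨by linarith [hu.2], by linarith [hu.1]⟩
      refine mul_le_mul ?_ (hη2 _ hyu) (by positivity) (Real.exp_pos _).le
      rw [← Real.exp_add]
      refine Real.exp_le_exp.2 ?_
      have : |u| ≤ |y| + η := by
        have := abs_sub_abs_le_abs_sub u y
        rw [abs_sub_comm] at this; linarith
      nlinarith
    refine le_trans (le_of_eq ?_) h2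
    rw [setIntegral_const, smul_eq_mul, Real.volume_real_Icc_of_le (by linarith)]
    ring
  · intro ξ
    rw [← kinv ξ]
    congr 1; ext y; rw [hKr]

lemma levy_prob {d y : ℕ → ℕ → ℝ} (hd : ∀ k n, 0 ≤ d k n) (hs : ∀ k, HasSum (d k) 1)
    {K : ℝ → ℝ} (hKc : Continuous K) (hK0 : ∀ u, 0 ≤ K u) (hKi : Integrable K)
    (hK1 : ∫ u, K u = 1)
    (hlim : ∀ ξ : ℝ, Tendsto (fun k => ∑' n, (d k n : ℂ) * cexp (I * ξ * y k n)) atTop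
      (𝓝 (∫ u : ℝ, (K u : ℂ) * cexp (I * ξ * u))))
    {φ : ℝ → ℝ} (hφ : Continuous φ) {M : ℝ} (hM : ∀ u, |φ u| ≤ M) :
    Tendsto (fun k => ∑' n, d k n * φ (y k n)) atTop (𝓝 (∫ u, K u * φ u)) := by
  let ν : ℕ → Measure ℝ := fun k =>
    Measure.sum fun n => ENNReal.ofReal (d k n) • Measure.dirac (y k n)
  let ν0 : Measure ℝ := volume.withDensity fun u => ENNReal.ofReal (K u)
  have hν : ∀ k, IsProbabilityMeasure (ν k) := by
    intro k
    refine ⟨?_⟩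
    rw [Measure.sum_apply _ MeasurableSet.univ]
    simp only [Measure.smul_apply, measure_univ, smul_eq_mul, mul_one]
    rw [← ENNReal.ofReal_tsum_of_nonneg (hd k) (hs k).summable, (hs k).tsum_eq, ENNReal.ofReal_one]
  have hν0 : IsProbabilityMeasure ν0 := by
    refine ⟨?_⟩
    rw [withDensity_apply _ MeasurableSet.univ, Measure.restrict_univ,
      ← ofReal_integral_eq_lintegral_ofReal hKi (Eventually.of_forall hK0), hK1, ENNReal.ofReal_one]
  let P : ℕ → ProbabilityMeasure ℝ := fun k => ⟨ν k, hν k⟩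
  let P0 : ProbabilityMeasure ℝ := ⟨ν0, hν0⟩
  have hc : Tendsto P atTop (𝓝 P0) := by
    refine ProbabilityMeasure.tendsto_of_tendsto_charFun fun ξ => ?_
    have e1 : ∀ k, charFun (P k : Measure ℝ) ξ = ∑' n, (d k n : ℂ) * cexp (I * ξ * y k n) := by
      intro k
      change charFun (ν k) ξ = _
      rw [charFun_apply_real, integral_sum_dirac (fun i => ENNReal.ofReal_ne_top)]
      congr 1; ext n
      rw [ENNReal.toReal_ofReal (hd k n), real_smul]
      congr 2; ring
    have e2 : charFun (P0 : Measure ℝ) ξ = ∫ u : ℝ, (K u : ℂ) * cexp (I * ξ * u) := by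
      change charFun ν0 ξ = _
      rw [charFun_apply_real, integral_withDensity_eq_integral_toReal_smul (by fun_prop)
        (Eventually.of_forall fun u => ENNReal.ofReal_lt_top)]
      congr 1; ext u
      rw [ENNReal.toReal_ofReal (hK0 u), real_smul]
      congr 2; ring
    simp_rw [e1]
    rw [e2]
    exact hlim ξ
  rw [ProbabilityMeasure.tendsto_iff_forall_integral_tendsto] at hc
  have h1 := hc (BoundedContinuousFunction.ofNormedAddCommGroup φ hφ M hM)
  have e1 : ∀ k, ∫ u, φ u ∂(ν k) = ∑' n, d k n * φ (y k n) := by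
    intro k
    rw [integral_sum_dirac (fun i => ENNReal.ofReal_ne_top)]
    congr 1; ext n
    rw [ENNReal.toReal_ofReal (hd k n), smul_eq_mul]
  have e2 : ∫ u, φ u ∂ν0 = ∫ u, K u * φ u := by
    rw [integral_withDensity_eq_integral_toReal_smul (by fun_prop)
        (Eventually.of_forall fun u => ENNReal.ofReal_lt_top)]
    congr 1; ext u
    rw [ENNReal.toReal_ofReal (hK0 u), smul_eq_mul]
  simp_rw [← e1, ← e2]
  exact h1

open Classical in
lemma levy {d y : ℕ → ℕ → ℝ} (hd : ∀ᶠ k in atTop, (∀ n, 0 ≤ d k n) ∧ Summable (d k))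
    {K : ℝ → ℝ} (hKc : Continuous K) (hK0 : ∀ u, 0 < K u) (hKi : Integrable K) {C : ℝ} (hC : 0 < C)
    (hlim : ∀ ξ : ℝ, Tendsto (fun k => ∑' n, (d k n : ℂ) * cexp (I * ξ * y k n)) atTop
      (𝓝 (C * ∫ u : ℝ, (K u : ℂ) * cexp (I * ξ * u))))
    {φ : ℝ → ℝ} (hφ : Continuous φ) {M : ℝ} (hM : ∀ u, |φ u| ≤ M) :
    Tendsto (fun k => ∑' n, d k n * φ (y k n)) atTop (𝓝 (C * ∫ u, K u * φ u)) := by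
  have hKp : 0 < ∫ u, K u := by
    rw [integral_pos_iff_support_of_nonneg (fun u => (hK0 u).le) hKi]
    have : Function.support K = univ := by ext u; simp [(hK0 u).ne']
    rw [this]; simp
  set J := ∫ u, K u with hJ
  set m : ℕ → ℝ := fun k => ∑' n, d k n with hm
  have hmlim : Tendsto m atTop (𝓝 (C * J)) := by
    have h0 := hlim 0
    simp only [ofReal_zero, mul_zero, zero_mul, Complex.exp_zero, mul_one] at h0
    rw [integral_complex_ofReal] at h0
    have h1 := (continuous_re.tendsto _).comp h0
    simp only [Function.comp_def, ← ofReal_tsum, ← ofReal_mul, ofReal_re] at h1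
    exact h1
  have hmp : ∀ᶠ k in atTop, 0 < m k := hmlim.eventually (lt_mem_nhds (by positivity))
  let good : ℕ → Prop := fun k => ((∀ n, 0 ≤ d k n) ∧ Summable (d k)) ∧ 0 < m k
  have hgood : ∀ᶠ k in atTop, good k := hd.and hmp
  let d' : ℕ → ℕ → ℝ := fun k n => if good k then d k n / m k else if n = 0 then 1 else 0
  have hlim' := levy_prob (d := d') (y := y) (K := fun u => K u / J) ?_ ?_ (by fun_prop)
    (fun u => (div_pos (hK0 u) hKp).le) (hKi.div_const _) ?_ ?_ hφ hM
  · have h2 := hmlim.mul hlim'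
    have e : C * J * ∫ u, K u / J * φ u = C * ∫ u, K u * φ u := by
      rw [mul_assoc, ← integral_const_mul]
      congr 2; ext u; field_simp
    rw [e] at h2
    refine h2.congr' ?_
    filter_upwards [hgood] with k hk
    rw [← tsum_mul_left]
    congr 1; ext n
    have := hk.2.ne'
    simp only [d', if_pos hk]
    field_simp
  · intro k n
    simp only [d']
    split_ifs with h
    · exact div_nonneg (h.1.1 n) h.2.le
    · exact zero_le_one
    · exact le_rfl
  · intro k
    simp only [d']
    split_ifs with h
    · have := h.1.2.hasSum.div_const (m k)
      rwa [show (∑' n, d k n) = m k from rfl, div_self h.2.ne'] at this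
    · exact hasSum_ite_eq 0 1
  · rw [integral_div, div_self hKp.ne']
  · intro ξ
    have hmc : Tendsto (fun k => (m k : ℂ)) atTop (𝓝 ((C * J : ℝ) : ℂ)) :=
      (continuous_ofReal.tendsto _).comp hmlim
    have h3 := (hlim ξ).div hmc (by exact_mod_cast (by positivity : C * J ≠ 0))
    have hCc : (C : ℂ) ≠ 0 := by exact_mod_cast hC.ne'
    have e : (C * ∫ u : ℝ, (K u : ℂ) * cexp (I * ξ * u)) / ((C * J : ℝ) : ℂ) =
        ∫ u : ℝ, ((K u / J : ℝ) : ℂ) * cexp (I * ξ * u) := by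
      rw [ofReal_mul, mul_div_mul_left _ _ hCc, ← integral_div]
      congr 1; ext u; push_cast; ring
    rw [e] at h3
    refine h3.congr' ?_
    filter_upwards [hgood] with k hk
    simp only [Pi.div_apply]
    rw [← tsum_div_const]
    congr 1; ext n
    simp only [d', if_pos hk]
    push_cast; ring

lemma KK_shift (p : ℝ → ℂ) (ξ y : ℝ) : KK (fun t => p (t - ξ)) y = KK p y * cexp (I * ξ * y) := by
  rw [KK, KK, ← integral_mul_const, ← integral_add_right_eq_self _ ξ]
  congr 1; ext t
  rw [add_sub_cancel_right, mul_assoc (p t), ← Complex.exp_add]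
  congr 2; push_cast; ring

lemma lim7 {a : ℕ → ℝ} (hnn : ∀ n, 0 ≤ a n) (ha0 : a 0 = 0) {A : ℝ} {f g h : ℂ → ℂ} {w : ℝ}
    (hw : 0 < w)
    (hconv : ∀ s : ℂ, A < s.re → Summable fun n : ℕ => ‖(a n : ℂ) * (n : ℂ) ^ (-s)‖)
    (hf : ∀ s : ℂ, A < s.re → f s = ∑' n : ℕ, (a n : ℂ) * (n : ℂ) ^ (-s))
    (hg : AnalyticOn ℂ g {s : ℂ | A ≤ s.re})
    (hh : AnalyticOn ℂ h {s : ℂ | A ≤ s.re}) (hgA : g (A : ℂ) ≠ 0)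
    (heq : ∀ s : ℂ, A < s.re → f s = g s * (s - (A : ℂ)) ^ (-(w : ℂ)) + h s)
    {p : ℝ → ℂ} {K : ℝ → ℝ} (hp : ContDiff ℝ (⊤ : ℕ∞) p) (hps : HasCompactSupport p)
    (hpK : ∀ y, KK p y = K y) (hKc : Continuous K) (hKi : Integrable K) (hK0 : ∀ y, 0 < K y)
    (hKp : ∀ ξ : ℝ, ∫ y : ℝ, (K y : ℂ) * cexp (I * ξ * y) = 2 * Real.pi * p (-ξ)) :
    ∃ C : ℝ, 0 < C ∧ g A / Real.Gamma w = C ∧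
      (∀ x : ℝ, 0 < x → Summable fun n : ℕ => x ^ (1 - w) *
        (a n * (n : ℝ) ^ (-A) * Real.exp (1 - Real.log n / x)) * K (x - Real.log n)) ∧
      ∀ (φ : ℝ → ℝ) (M : ℝ), Continuous φ → (∀ u, |φ u| ≤ M) →
      Tendsto (fun x : ℝ => ∑' n : ℕ, (x ^ (1 - w) *
        (a n * (n : ℝ) ^ (-A) * Real.exp (1 - Real.log n / x)) * K (x - Real.log n)) *
          φ (x - Real.log n)) atTop (𝓝 (C * ∫ u, K u * φ u)) := by
  set d : ℝ → ℕ → ℝ := fun x n => x ^ (1 - w) *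
        (a n * (n : ℝ) ^ (-A) * Real.exp (1 - Real.log n / x)) * K (x - Real.log n) with hd
  have hd0 : ∀ x : ℝ, 0 < x → ∀ n, 0 ≤ d x n := by
    intro x hx n
    have := hnn n
    have := hK0 (x - Real.log n)
    simp only [hd]; positivity
  have hsum : ∀ x : ℝ, 0 < x → Summable (d x) := by
    intro x hx
    have h1 := (swap ha0 hconv hf (hp.continuous.integrable_of_hasCompactSupport hps) hx).summable
    simp_rw [hpK, ← ofReal_mul] at h1
    refine ((summable_ofReal.1 h1).mul_left (x ^ (1 - w) * Real.exp 1)).congr fun n => ?_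
    simp only [hd]
    rw [show 1 - Real.log n / x = 1 + (-(Real.log n / x)) by ring, Real.exp_add]
    ring
  have hchar : ∀ ξ : ℝ, Tendsto (fun x : ℝ => ∑' n, (d x n : ℂ) * cexp (I * ξ * (x - Real.log n : ℝ))) atTop
      (𝓝 (g A / Real.Gamma w * ∫ u : ℝ, (K u : ℂ) * cexp (I * ξ * u))) := by
    intro ξ
    have hp' : ContDiff ℝ 2 (fun t => p (t - ξ)) :=
      (hp.comp (contDiff_id.sub contDiff_const)).of_le
        (WithTop.coe_le_coe.2 (le_top : (2 : ℕ∞) ≤ ⊤))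
    have hps' : HasCompactSupport (fun t => p (t - ξ)) :=
      hps.comp_homeomorph (Homeomorph.subRight ξ)
    have h1 := (lim5 ha0 hw hconv hf hg hh heq hp' hps').const_mul ((Real.exp 1 : ℝ) : ℂ)
    have e : ((Real.exp 1 : ℝ) : ℂ) * (p (0 - ξ) * g A * (2 * Real.pi * Real.exp (-1) / Real.Gamma w)) =
        g A / Real.Gamma w * ∫ u : ℝ, (K u : ℂ) * cexp (I * ξ * u) := by
      rw [hKp, zero_sub]
      have : ((Real.exp 1 : ℝ) : ℂ) * ((Real.exp (-1) : ℝ) : ℂ) = 1 := by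
        rw [← ofReal_mul, ← Real.exp_add]; simp
      calc _ = (((Real.exp 1 : ℝ) : ℂ) * ((Real.exp (-1) : ℝ) : ℂ)) * (p (-ξ) * g A * (2 * Real.pi / Real.Gamma w)) := by ring
        _ = _ := by rw [this]; ring
    rw [e] at h1
    refine h1.congr fun x => ?_
    rw [← mul_assoc, ← tsum_mul_left]
    congr 1; ext n
    simp only [hd]
    rw [KK_shift, hpK, show 1 - Real.log n / x = 1 + (-(Real.log n / x)) by ring, Real.exp_add]
    push_cast; ring
  have hGp : 0 < Real.Gamma w := Real.Gamma_pos_of_pos hw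
  have hJp : 0 < ∫ u, K u := by
    rw [integral_pos_iff_support_of_nonneg (fun u => (hK0 u).le) hKi]
    have : Function.support K = univ := by ext u; simp [(hK0 u).ne']
    rw [this]; simp
  obtain ⟨C, hC, hCe⟩ : ∃ C : ℝ, 0 < C ∧ g A / Real.Gamma w = C := by
    have h0 := hchar 0
    simp only [ofReal_zero, mul_zero, zero_mul, Complex.exp_zero, mul_one] at h0
    rw [integral_complex_ofReal] at h0
    simp only [← ofReal_tsum] at h0
    set z : ℂ := g A / Real.Gamma w with hz
    have hre := (continuous_re.tendsto _).comp h0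
    have him := (continuous_im.tendsto _).comp h0
    simp only [Function.comp_def, ofReal_re, ofReal_im, re_mul_ofReal, im_mul_ofReal] at hre him
    have i0 : z.im * ∫ u, K u = 0 := tendsto_nhds_unique him tendsto_const_nhds
    have r0 : 0 ≤ z.re * ∫ u, K u := ge_of_tendsto hre (by
      filter_upwards [eventually_gt_atTop 0] with x hx
      exact tsum_nonneg (hd0 x hx))
    have i1 : z.im = 0 := (mul_eq_zero.1 i0).resolve_right hJp.ne'
    have r1 : 0 ≤ z.re := nonneg_of_mul_nonneg_left r0 hJp
    have zr : z = (z.re : ℂ) := by apply Complex.ext <;> simp [i1]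
    have zn : z ≠ 0 := div_ne_zero hgA (by exact_mod_cast hGp.ne')
    refine ⟨z.re, lt_of_le_of_ne r1 fun h => zn ?_, zr⟩
    rw [zr, ← h]; simp
  refine ⟨C, hC, hCe, hsum, fun φ M hφ hM => ?_⟩
  refine tendsto_of_seq_tendsto fun x hx => ?_
  refine levy (d := fun k => d (x k)) (y := fun k n => x k - Real.log n) ?_ hKc hK0 hKi hC ?_ hφ hM
  · filter_upwards [hx.eventually (eventually_gt_atTop 0)] with k hk
    exact ⟨hd0 _ hk, hsum _ hk⟩
  · intro ξ
    rw [← hCe]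
    exact (hchar ξ).comp hx

noncomputable def cut (A y : ℝ) : ℝ := if 0 ≤ y then Real.exp (-A * y) else 0

noncomputable def clamp (y : ℝ) : ℝ := max 0 (min 1 y)

lemma clamp_cont : Continuous clamp := by unfold clamp; fun_prop
lemma clamp_nonneg (y : ℝ) : 0 ≤ clamp y := le_max_left _ _
lemma clamp_le (y : ℝ) : clamp y ≤ 1 := max_le zero_le_one (min_le_left _ _)
lemma clamp_neg {y : ℝ} (h : y ≤ 0) : clamp y = 0 := max_eq_left ((min_le_right _ _).trans h)
lemma clamp_one {y : ℝ} (h : 1 ≤ y) : clamp y = 1 := by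
  unfold clamp; rw [min_eq_left h]; exact max_eq_right zero_le_one

lemma upper_int {A δ : ℝ} (hA : 0 < A) (hδ : 0 < δ) :
    ∫ y, clamp (1 + y / δ) * Real.exp (-A * y) ≤ Real.exp (A * δ) / A := by
  have hi : IntegrableOn (fun y : ℝ => Real.exp (-A * y)) (Ioi (-δ)) :=
    integrableOn_exp_mul_Ioi (neg_lt_zero.2 hA) _
  have h1 : ∫ y in Ioi (-δ), Real.exp (-A * y) = Real.exp (A * δ) / A := by
    rw [integral_exp_mul_Ioi (neg_lt_zero.2 hA)]
    rw [neg_div_neg_eq]; congr 2; ring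
  rw [← h1, ← integral_indicator measurableSet_Ioi]
  refine integral_mono_of_nonneg (Eventually.of_forall fun y =>
    mul_nonneg (clamp_nonneg _) (Real.exp_pos _).le) (hi.integrable_indicator measurableSet_Ioi)
    (Eventually.of_forall fun y => ?_)
  by_cases hy : y ∈ Ioi (-δ)
  · simp only [indicator_of_mem hy]
    exact mul_le_of_le_one_left (Real.exp_pos _).le (clamp_le _)
  · simp only [indicator_of_notMem hy]
    have : y ≤ -δ := not_lt.1 hy
    rw [clamp_neg, zero_mul]
    have : y / δ ≤ -1 := by rw [div_le_iff₀ hδ]; linarith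
    linarith

lemma lower_int {A δ : ℝ} (hA : 0 < A) (hδ : 0 < δ) :
    Real.exp (-(A + δ) * δ) / (A + δ) ≤ ∫ y, clamp (y / δ) * Real.exp (-(A + δ) * y) := by
  have hn : -(A + δ) < 0 := by linarith
  have h1 : ∫ y in Ioi δ, Real.exp (-(A + δ) * y) = Real.exp (-(A + δ) * δ) / (A + δ) := by
    rw [integral_exp_mul_Ioi hn, neg_div_neg_eq]
  have hi0 : IntegrableOn (fun y : ℝ => Real.exp (-(A + δ) * y)) (Ioi 0) :=
    integrableOn_exp_mul_Ioi hn _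
  have hi : Integrable (fun y => clamp (y / δ) * Real.exp (-(A + δ) * y)) := by
    refine (hi0.integrable_indicator measurableSet_Ioi).mono' ?_ (Eventually.of_forall fun y => ?_)
    · have := clamp_cont
      exact Continuous.aestronglyMeasurable (by fun_prop)
    · rw [Real.norm_of_nonneg (mul_nonneg (clamp_nonneg _) (Real.exp_pos _).le)]
      by_cases hy : y ∈ Ioi 0
      · simp only [indicator_of_mem hy]
        exact mul_le_of_le_one_left (Real.exp_pos _).le (clamp_le _)
      · simp only [indicator_of_notMem hy]
        have : y ≤ 0 := not_lt.1 hy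
        rw [clamp_neg, zero_mul]
        exact div_nonpos_of_nonpos_of_nonneg this hδ.le
  rw [← h1]
  refine le_trans (le_of_eq ?_) (setIntegral_le_integral (s := Ioi δ) hi (Eventually.of_forall fun y =>
    mul_nonneg (clamp_nonneg _) (Real.exp_pos _).le))
  refine setIntegral_congr_fun measurableSet_Ioi fun y hy => ?_
  have : 1 ≤ y / δ := by rw [le_div_iff₀ hδ]; linarith [show δ < y from hy]
  simp only [clamp_one this, one_mul]

lemma cut_sum {a : ℕ → ℝ} (ha0 : a 0 = 0) (A w x : ℝ) :
    HasSum (fun n : ℕ => x ^ (1 - w) * (a n * (n : ℝ) ^ (-A)) * cut A (x - Real.log n))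
      (x ^ (1 - w) * Real.exp (-A * x) * ∑ n ∈ Finset.Icc 1 ⌊Real.exp x⌋₊, a n) := by
  rw [Finset.mul_sum]
  have key : ∀ n ∈ Finset.Icc 1 ⌊Real.exp x⌋₊, x ^ (1 - w) * Real.exp (-A * x) * a n =
      x ^ (1 - w) * (a n * (n : ℝ) ^ (-A)) * cut A (x - Real.log n) := by
    intro n hn
    rw [Finset.mem_Icc] at hn
    have hn0 : (0 : ℝ) < n := by exact_mod_cast hn.1
    have h1 : (n : ℝ) ≤ Real.exp x := (Nat.le_floor_iff (Real.exp_pos _).le).1 hn.2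
    have h2 : Real.log n ≤ x := (Real.log_le_iff_le_exp hn0).2 h1
    rw [cut, if_pos (by linarith), Real.rpow_def_of_pos hn0]
    have : Real.exp (-A * x) = Real.exp (Real.log n * -A) * Real.exp (-A * (x - Real.log n)) := by
      rw [← Real.exp_add]; congr 1; ring
    rw [this]; ring
  rw [Finset.sum_congr rfl key]
  refine hasSum_sum_of_ne_finset_zero fun n hn => ?_
  by_cases h0 : n = 0
  · simp [h0, ha0]
  · have hn0 : (0 : ℝ) < n := by exact_mod_cast Nat.pos_of_ne_zero h0
    rw [Finset.mem_Icc, not_and, not_le] at hn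
    have h1 := hn (Nat.one_le_iff_ne_zero.2 h0)
    have h2 : Real.exp x < n := (Nat.floor_lt (Real.exp_pos _).le).1 h1
    have h3 : x < Real.log n := (Real.lt_log_iff_exp_lt hn0).2 h2
    rw [cut, if_neg (by linarith), mul_zero]

lemma main {a : ℕ → ℝ} (hnn : ∀ n, 0 ≤ a n) (ha0 : a 0 = 0) {A : ℝ} (hA : 0 < A)
    {f g h : ℂ → ℂ} {w : ℝ} (hw : 0 < w)
    (hconv : ∀ s : ℂ, A < s.re → Summable fun n : ℕ => ‖(a n : ℂ) * (n : ℂ) ^ (-s)‖)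
    (hf : ∀ s : ℂ, A < s.re → f s = ∑' n : ℕ, (a n : ℂ) * (n : ℂ) ^ (-s))
    (hg : AnalyticOn ℂ g {s : ℂ | A ≤ s.re})
    (hh : AnalyticOn ℂ h {s : ℂ | A ≤ s.re}) (hgA : g (A : ℂ) ≠ 0)
    (heq : ∀ s : ℂ, A < s.re → f s = g s * (s - (A : ℂ)) ^ (-(w : ℂ)) + h s) :
    ∃ C : ℝ, g A / Real.Gamma w = C ∧ Tendsto (fun x : ℝ =>
      x ^ (1 - w) * Real.exp (-A * x) * ∑ n ∈ Finset.Icc 1 ⌊Real.exp x⌋₊, a n) atTop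
      (𝓝 (C / A)) := by
  obtain ⟨p, K, c, hp, hps, hpK, hKc, hKi, hc, hcK, hKp⟩ := exists_kernel hA
  have hK0 : ∀ y, 0 < K y := fun y => lt_of_lt_of_le (by positivity) (hcK y)
  obtain ⟨C, hC, hCe, hsum, hlim⟩ := lim7 hnn ha0 hw hconv hf hg hh hgA heq hp hps hpK hKc hKi hK0 hKp
  refine ⟨C, hCe, ?_⟩
  -- transfer to a test function `U` dominated by the kernel
  have hU : ∀ (U : ℝ → ℝ) (M : ℝ), Continuous U → (∀ y, |U y| ≤ M * Real.exp (-A * |y|)) →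
      (∀ x : ℝ, 0 < x → Summable fun n : ℕ => x ^ (1 - w) * (a n * (n : ℝ) ^ (-A)) *
        (Real.exp ((x - Real.log n) / x) * U (x - Real.log n))) ∧
      Tendsto (fun x : ℝ => ∑' n : ℕ, x ^ (1 - w) * (a n * (n : ℝ) ^ (-A)) *
        (Real.exp ((x - Real.log n) / x) * U (x - Real.log n))) atTop (𝓝 (C * ∫ u, U u)) := by
    intro U M hUc hUM
    have hb : ∀ u, |U u / K u| ≤ M / c := by
      intro u
      rw [abs_div, abs_of_pos (hK0 u), div_le_div_iff₀ (hK0 u) hc]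
      have hM : 0 ≤ M := nonneg_of_mul_nonneg_left ((abs_nonneg _).trans (hUM u)) (Real.exp_pos _)
      calc |U u| * c ≤ M * Real.exp (-A * |u|) * c := mul_le_mul_of_nonneg_right (hUM u) hc.le
        _ = M * (c * Real.exp (-A * |u|)) := by ring
        _ ≤ M * K u := mul_le_mul_of_nonneg_left (hcK u) hM
    have hφ : Continuous fun u => U u / K u := hUc.div hKc fun u => (hK0 u).ne'
    have ht : ∀ x : ℝ, 0 < x → ∀ n : ℕ, x ^ (1 - w) * (a n * (n : ℝ) ^ (-A) * Real.exp (1 - Real.log n / x)) *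
        K (x - Real.log n) * (U (x - Real.log n) / K (x - Real.log n)) =
        x ^ (1 - w) * (a n * (n : ℝ) ^ (-A)) *
        (Real.exp ((x - Real.log n) / x) * U (x - Real.log n)) := by
      intro x hx n
      have := (hK0 (x - Real.log n)).ne'
      rw [sub_div, div_self hx.ne']
      field_simp
    constructor
    · intro x hx
      have h1 : Summable fun n : ℕ => x ^ (1 - w) * (a n * (n : ℝ) ^ (-A) * Real.exp (1 - Real.log n / x)) *
        K (x - Real.log n) * (U (x - Real.log n) / K (x - Real.log n)) := by
        refine Summable.of_norm_bounded ((hsum x hx).norm.mul_right (M / c)) fun n => ?_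
        rw [norm_mul]
        exact mul_le_mul_of_nonneg_left (hb _) (norm_nonneg _)
      exact h1.congr (ht x hx)
    · have h1 := hlim _ _ hφ hb
      have e : ∫ u, K u * (U u / K u) = ∫ u, U u := by
        congr 1; ext u; have := (hK0 u).ne'; field_simp
      rw [e] at h1
      refine h1.congr' ?_
      filter_upwards [eventually_gt_atTop 0] with x hx
      exact tsum_congr (ht x hx)
  have hcl := clamp_cont
  refine tendsto_order.2 ⟨fun l hl => ?_, fun u hu => ?_⟩
  · have hδ : ∀ᶠ δ in 𝓝[>] (0 : ℝ), l < C * (Real.exp (-(A + δ) * δ) / (A + δ)) := by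
      have : ContinuousAt (fun δ : ℝ => C * (Real.exp (-(A + δ) * δ) / (A + δ))) 0 := by
        refine ContinuousAt.mul continuousAt_const (ContinuousAt.div (by fun_prop) (by fun_prop) ?_)
        simpa using hA.ne'
      refine (this.mono_left nhdsWithin_le_nhds).eventually (lt_mem_nhds ?_)
      simpa [div_eq_mul_inv] using hl
    obtain ⟨δ, hl', hδ⟩ := (hδ.and self_mem_nhdsWithin).exists
    have hδ : 0 < δ := hδ
    obtain ⟨s1, t1⟩ := hU (fun y => clamp (y / δ) * Real.exp (-(A + δ) * y)) 1 (by fun_prop) (by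
      intro y
      rw [abs_of_nonneg (mul_nonneg (clamp_nonneg _) (Real.exp_pos _).le), one_mul]
      by_cases hy : 0 < y
      · rw [abs_of_pos hy]
        calc _ ≤ Real.exp (-(A + δ) * y) := mul_le_of_le_one_left (Real.exp_pos _).le (clamp_le _)
          _ ≤ _ := Real.exp_le_exp.2 (by nlinarith)
      · rw [clamp_neg (div_nonpos_of_nonpos_of_nonneg (not_lt.1 hy) hδ.le), zero_mul]
        positivity)
    have hlt := hl'.trans_le (mul_le_mul_of_nonneg_left (lower_int hA hδ) hC.le)
    filter_upwards [t1.eventually (lt_mem_nhds hlt), eventually_gt_atTop 0,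
      eventually_ge_atTop (1 / δ)] with x hx hx0 hxδ
    refine hx.trans_le ?_
    rw [← (cut_sum ha0 A w x).tsum_eq]
    refine (s1 x hx0).tsum_le_tsum (fun n => ?_) (cut_sum ha0 A w x).summable
    have := hnn n
    refine mul_le_mul_of_nonneg_left ?_ (by positivity)
    set y := x - Real.log n
    by_cases hy : 0 < y
    · rw [cut, if_pos hy.le]
      calc _ ≤ Real.exp (y / x) * Real.exp (-(A + δ) * y) :=
            mul_le_mul_of_nonneg_left (mul_le_of_le_one_left (Real.exp_pos _).le (clamp_le _))
              (Real.exp_pos _).le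
        _ ≤ _ := by
            rw [← Real.exp_add]
            refine Real.exp_le_exp.2 ?_
            have : y / x ≤ δ * y := by
              rw [div_le_iff₀ hx0]
              have : 1 ≤ x * δ := by rwa [div_le_iff₀ hδ] at hxδ
              nlinarith
            linarith
    · rw [clamp_neg (div_nonpos_of_nonpos_of_nonneg (not_lt.1 hy) hδ.le), zero_mul, mul_zero, cut]
      split_ifs <;> positivity
  · have hδ : ∀ᶠ δ in 𝓝[>] (0 : ℝ), C * (Real.exp (A * δ) / A) < u := by
      have : ContinuousAt (fun δ : ℝ => C * (Real.exp (A * δ) / A)) 0 := by fun_prop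
      refine (this.mono_left nhdsWithin_le_nhds).eventually (gt_mem_nhds ?_)
      simpa [div_eq_mul_inv] using hu
    obtain ⟨δ, hl', hδ⟩ := (hδ.and self_mem_nhdsWithin).exists
    have hδ : 0 < δ := hδ
    obtain ⟨s1, t1⟩ := hU (fun y => clamp (1 + y / δ) * Real.exp (-A * y)) (Real.exp (2 * A * δ))
      (by fun_prop) (by
      intro y
      rw [abs_of_nonneg (mul_nonneg (clamp_nonneg _) (Real.exp_pos _).le), ← Real.exp_add]
      by_cases hy : -δ < y
      · calc _ ≤ Real.exp (-A * y) := mul_le_of_le_one_left (Real.exp_pos _).le (clamp_le _)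
          _ ≤ _ := by
            refine Real.exp_le_exp.2 ?_
            rcases abs_cases y with ⟨h1, h2⟩ | ⟨h1, h2⟩ <;> rw [h1] <;> nlinarith
      · rw [clamp_neg, zero_mul]
        · positivity
        · have : y / δ ≤ -1 := by rw [div_le_iff₀ hδ]; linarith [not_lt.1 hy]
          linarith)
    have hlt := (mul_le_mul_of_nonneg_left (upper_int hA hδ) hC.le).trans_lt hl'
    filter_upwards [t1.eventually (gt_mem_nhds hlt), eventually_gt_atTop 0] with x hx hx0
    refine lt_of_le_of_lt ?_ hx
    rw [← (cut_sum ha0 A w x).tsum_eq]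
    refine (cut_sum ha0 A w x).summable.tsum_le_tsum (fun n => ?_) (s1 x hx0)
    have := hnn n
    refine mul_le_mul_of_nonneg_left ?_ (by positivity)
    set y := x - Real.log n
    by_cases hy : 0 ≤ y
    · rw [cut, if_pos hy, clamp_one (by linarith [div_nonneg hy hδ.le]), one_mul]
      exact le_mul_of_one_le_left (Real.exp_pos _).le (Real.one_le_exp (by positivity))
    · rw [cut, if_neg hy]
      exact mul_nonneg (Real.exp_pos _).le (mul_nonneg (clamp_nonneg _) (Real.exp_pos _).le)

end DI

/-- The Délange–Ikehara Tauberian theorem: if `f(s) = ∑ aₙ n^{-s}` has nonnegative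
coefficients, converges for `Re s > a > 0`, and on its domain of convergence
`f(s) = g(s)(s-a)^{-w} + h(s)` with `g, h` holomorphic on the closed half-plane
`Re s ≥ a`, `g(a) ≠ 0` and `w > 0`, then
`∑_{n ≤ X} aₙ ∼ (g(a)/(a·Γ(w)))·X^a·(log X)^{w-1}` as `X → ∞`. -/
theorem stmt_6 (a : ℕ → ℝ) (hnn : ∀ n, 0 ≤ a n) (ha0 : a 0 = 0)
    (A : ℝ) (hA : 0 < A)
    (f g h : ℂ → ℂ) (w : ℝ) (hw : 0 < w)
    (hconv : ∀ s : ℂ, A < s.re → Summable fun n : ℕ => ‖(a n : ℂ) * (n : ℂ) ^ (-s)‖)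
    (hf : ∀ s : ℂ, A < s.re → f s = ∑' n : ℕ, (a n : ℂ) * (n : ℂ) ^ (-s))
    (hg : AnalyticOn ℂ g {s : ℂ | A ≤ s.re})
    (hh : AnalyticOn ℂ h {s : ℂ | A ≤ s.re})
    (hgA : g (A : ℂ) ≠ 0)
    (heq : ∀ s : ℂ, A < s.re → f s = g s * (s - (A : ℂ)) ^ (-(w : ℂ)) + h s) :
    Tendsto (fun X : ℝ =>
        (((∑ n ∈ Finset.Icc 1 ⌊X⌋₊, a n : ℝ) : ℂ) /
          (((X ^ A * Real.log X ^ (w - 1) : ℝ)) : ℂ)))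
      atTop (nhds (g (A : ℂ) / ((A : ℂ) * (Real.Gamma w : ℂ)))) := by
  obtain ⟨C, hC, hlim⟩ := DI.main hnn ha0 hA hw hconv hf hg hh hgA heq
  have e : g (A : ℂ) / ((A : ℂ) * (Real.Gamma w : ℂ)) = ((C / A : ℝ) : ℂ) := by
    rw [Complex.ofReal_div, ← hC, div_div, mul_comm (A : ℂ)]
  rw [e]
  have h1 := (Complex.continuous_ofReal.tendsto _).comp (hlim.comp Real.tendsto_log_atTop)
  refine h1.congr' ?_
  filter_upwards [eventually_gt_atTop 1] with X hX
  have hX0 : 0 < X := by linarith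
  have hlog : 0 < Real.log X := Real.log_pos hX
  simp only [Function.comp_def]
  rw [← Complex.ofReal_div, Real.exp_log hX0]
  congr 1
  rw [show 1 - w = -(w - 1) by ring, Real.rpow_neg hlog.le, show -A * Real.log X = -(Real.log X * A) by ring,
    Real.exp_neg, ← Real.rpow_def_of_pos hX0, div_eq_mul_inv, mul_inv]
  ring
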